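/- Let φ : ℝ² → ℝ be continuously differentiable with φ(0,0) < 0, satisfying: (i) x·φ_x(x,y) + y·φ_y(x,y) ≥ 0 on ℝ², and the set {(x,y) : x·φ_x(x,y) + y·φ_y(x,y) = 0} contains no non-trivial positive semi-orbit of the system (S): ẋ = y, ẏ = −x − y·φ(x,y); (ii) there exists M > 0 such that φ(x,y) ≥ 0 outside the disk D_M = {(x,y) : x² + y² ≤ M²}, and the set {φ = 0} \ D_M contains no non-trivial positive semi-orbit of (S). Then (S) has exactly one limit cycle; this limit cycle is hyperbolic and attracts every non-constant solution of (S). -/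

import Mathlib

open Set Filter Metric Real Topology intervalIntegral

noncomputable section

/-- `γ` solves the planar ODE with vector field `F` at every time in `s`. -/
def IsSolOn (F : ℝ × ℝ → ℝ × ℝ) (γ : ℝ → ℝ × ℝ) (s : Set ℝ) : Prop :=
  ∀ t ∈ s, HasDerivAt γ (F (γ t)) t

/-- A cycle: a non-constant `T`-periodic solution (with `T > 0`). -/
def IsCycle (F : ℝ × ℝ → ℝ × ℝ) (γ : ℝ → ℝ × ℝ) (T : ℝ) : Prop :=
  (∀ t, HasDerivAt γ (F (γ t)) t) ∧ 0 < T ∧ (∀ t, γ (t + T) = γ t) ∧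
    ∃ t₁ t₂, γ t₁ ≠ γ t₂

/-- A limit cycle: a cycle whose orbit has a neighbourhood containing no orbit
of any other cycle. -/
def IsLimitCycle (F : ℝ × ℝ → ℝ × ℝ) (γ : ℝ → ℝ × ℝ) (T : ℝ) : Prop :=
  IsCycle F γ T ∧
    ∃ U : Set (ℝ × ℝ), IsOpen U ∧ range γ ⊆ U ∧
      ∀ (γ' : ℝ → ℝ × ℝ) (T' : ℝ), IsCycle F γ' T' →
        range γ' ≠ range γ → ¬ range γ' ⊆ U

/-- There is a non-trivial positive semi-orbit of the system contained in `Z`. -/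
def HasSemiOrbitIn (F : ℝ × ℝ → ℝ × ℝ) (Z : Set (ℝ × ℝ)) : Prop :=
  ∃ (γ : ℝ → ℝ × ℝ) (t₀ : ℝ), IsSolOn F γ (Ici t₀) ∧
    (∃ t₁ ∈ Ici t₀, ∃ t₂ ∈ Ici t₀, γ t₁ ≠ γ t₂) ∧ γ '' Ici t₀ ⊆ Z

/-- There is a non-trivial (full) orbit of the system contained in `Z`. -/
def HasOrbitIn (F : ℝ × ℝ → ℝ × ℝ) (Z : Set (ℝ × ℝ)) : Prop :=
  ∃ γ : ℝ → ℝ × ℝ, (∀ t, HasDerivAt γ (F (γ t)) t) ∧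
    (∃ t₁ t₂, γ t₁ ≠ γ t₂) ∧ range γ ⊆ Z

/-- The vector field of system (S): ẋ = y, ẏ = −x − y·φ(x,y). -/
def phiVF (φ : ℝ × ℝ → ℝ) : ℝ × ℝ → ℝ × ℝ :=
  fun p => (p.2, -p.1 - p.2 * φ p)

/-! In clockwise polar coordinates with logarithmic radius `ρ` and angle `s`, the moment
`y ẋ - x ẏ` of the velocity satisfies a linear differential inequality because `φ` is radially
nondecreasing. It therefore stays positive, and orbits turn clockwise forever. Regard orbits as
graphs `s ↦ ρ s`; the radial monotonicity of `φ` makes `(ρ₁ - ρ₂) ^ 2` nonincreasing in `s` for any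
two of them. Hence the return map to the positive `x`-axis is 1-Lipschitz in `ρ`. The signs of `φ`
near the origin and outside the disk give it an invariant interval, hence a fixed point, which is
a cycle. Somewhere off the `x`-axis this cycle meets a point where the radial derivative of `φ` is
positive, so the return map strictly contracts towards the fixed point and its iterates converge.

For hyperbolicity, the logarithm of the moment is periodic along the cycle, and its derivative is
the divergence plus a nonnegative term that is positive at that same point; thus the integral of
the divergence is negative. -/

section RealAnalysis

lemma le_of_deriv_nonpos_of_lt {f f' : ℝ → ℝ} {a K : ℝ}
    (hf : ∀ t ∈ Ici a, HasDerivAt f (f' t) t) (hf' : ∀ t ∈ Ici a, K < f t → f' t ≤ 0)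
    (ha : f a ≤ K) : ∀ t ∈ Ici a, f t ≤ K := by
  intro t ht
  by_contra! hKt
  have hcont : ContinuousOn f (Icc a t) := fun u hu => (hf u hu.1).continuousAt.continuousWithinAt
  have hcompact : IsCompact (Icc a t ∩ f ⁻¹' Iic K) :=
    isCompact_Icc.of_isClosed_subset (hcont.preimage_isClosed_of_isClosed isClosed_Icc isClosed_Iic)
      inter_subset_left
  obtain ⟨s, ⟨hst, hfs⟩, hs_max⟩ := hcompact.exists_isGreatest ⟨a, ⟨le_rfl, ht⟩, ha⟩
  have hanti : AntitoneOn f (Icc s t) := by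
    refine antitoneOn_of_hasDerivWithinAt_nonpos (f' := f') (convex_Icc s t)
      (hcont.mono (Icc_subset_Icc_left hst.1))
      (fun u hu => ?_) (fun u hu => ?_) <;> rw [interior_Icc] at hu
    · exact (hf u (hst.1.trans hu.1.le)).hasDerivWithinAt
    · refine hf' u (hst.1.trans hu.1.le) (not_le.1 fun hle => hu.1.not_ge ?_)
      exact hs_max ⟨⟨hst.1.trans hu.1.le, hu.2.le⟩, hle⟩
  exact hKt.not_ge ((hanti (left_mem_Icc.2 hst.2) (right_mem_Icc.2 hst.2) hst.2).trans hfs)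

lemma tendsto_atTop_of_le_deriv {f f' : ℝ → ℝ} {a ε : ℝ} (hε : 0 < ε)
    (hf : ∀ t ∈ Ici a, HasDerivAt f (f' t) t) (hf' : ∀ t ∈ Ici a, ε ≤ f' t) :
    Tendsto f atTop atTop := by
  have hlin : ∀ t ∈ Ici a, f a + ε * (t - a) ≤ f t := fun t ht => by
    have := (convex_Ici a).mul_sub_le_image_sub_of_le_deriv
      (fun u hu => (hf u hu).continuousAt.continuousWithinAt)
      (fun u hu => (hf u (interior_subset hu)).differentiableAt.differentiableWithinAt)
      (fun u hu => (hf u (interior_subset hu)).deriv.symm ▸ hf' u (interior_subset hu))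
      a self_mem_Ici t ht ht
    linarith
  refine tendsto_atTop_mono' _ ((eventually_ge_atTop a).mono hlin) ?_
  exact tendsto_atTop_add_const_left _ _
    ((tendsto_atTop_add_const_right _ (-a) tendsto_id).const_mul_atTop hε)

lemma exists_hasDerivAt_max {E : Type*} [NormedAddCommGroup E] [NormedSpace ℝ E] [CompleteSpace E]
    {g : ℝ → E} {a : ℝ} (hg : ContinuousOn g (Ici a)) (c : E) :
    ∃ G : ℝ → E, G a = c ∧ ∀ t, HasDerivAt G (g (max t a)) t := by
  have hcont : Continuous fun t => g (max t a) :=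
    hg.comp_continuous (by fun_prop) fun t => le_max_right t a
  exact ⟨fun t => c + ∫ u in a..t, g (max u a), by simp,
    fun t => (hcont.integral_hasStrictDerivAt a t).hasDerivAt.const_add c⟩

lemma pos_of_mul_le_deriv {f f' g : ℝ → ℝ} {a : ℝ} (hg : ContinuousOn g (Ici a))
    (hf : ∀ t ∈ Ici a, HasDerivAt f (f' t) t) (hf' : ∀ t ∈ Ici a, g t * f t ≤ f' t)
    (ha : 0 < f a) : ∀ t ∈ Ici a, 0 < f t := by
  intro t ht
  obtain ⟨G, -, hG⟩ := exists_hasDerivAt_max hg 0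
  have hderiv : ∀ u ∈ Ici a, HasDerivAt (fun u => Real.exp (-G u) * f u)
      (Real.exp (-G u) * (f' u - g u * f u)) u := fun u hu => by
    have hGu := hG u
    rw [max_eq_left hu] at hGu
    exact (hGu.neg.exp.mul (hf u hu)).congr_deriv (by simp only [Pi.neg_apply]; ring)
  have hmono : MonotoneOn (fun u => Real.exp (-G u) * f u) (Ici a) :=
    monotoneOn_of_hasDerivWithinAt_nonneg (convex_Ici a)
      (fun u hu => (hderiv u hu).continuousAt.continuousWithinAt)
      (fun u hu => (hderiv u (interior_subset hu)).hasDerivWithinAt)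
      (fun u hu => mul_nonneg (Real.exp_pos _).le (sub_nonneg.2 (hf' u (interior_subset hu))))
  have hpos : 0 < Real.exp (-G t) * f t :=
    (mul_pos (Real.exp_pos _) ha).trans_le (hmono self_mem_Ici ht ht)
  exact pos_of_mul_pos_right hpos (Real.exp_pos _).le

lemma tendsto_iterate_of_dist_lt {X : Type*} [MetricSpace X] [ProperSpace X] {f : X → X} {q : X}
    (hf : Continuous f) (hq : f q = q) (hdist : ∀ x, x ≠ q → dist (f x) q < dist x q) (x : X) :
    Tendsto (fun n => f^[n] x) atTop (𝓝 q) := by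
  have hanti : Antitone fun n => dist (f^[n] x) q := antitone_nat_of_succ_le fun n => by
    rw [Function.iterate_succ_apply']
    rcases eq_or_ne (f^[n] x) q with h | h
    · rw [h, hq]
    · exact (hdist _ h).le
  obtain ⟨d, hd⟩ : ∃ d, Tendsto (fun n => dist (f^[n] x) q) atTop (𝓝 d) :=
    ⟨_, tendsto_atTop_ciInf hanti ⟨0, forall_mem_range.2 fun n => dist_nonneg⟩⟩
  obtain ⟨y, -, n, hn, hy⟩ := (isCompact_closedBall q (dist x q)).tendsto_subseq
    fun n => mem_closedBall.2 (hanti n.zero_le)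
  have hyd : dist y q = d :=
    tendsto_nhds_unique (hy.dist tendsto_const_nhds) (hd.comp hn.tendsto_atTop)
  have hfyd : dist (f y) q = d := by
    refine tendsto_nhds_unique ((hf.tendsto y |>.comp hy).dist tendsto_const_nhds) ?_
    refine ((tendsto_add_atTop_iff_nat 1).2 hd |>.comp hn.tendsto_atTop).congr fun k => ?_
    simp only [Function.comp_apply, Function.iterate_succ_apply']
  have hyq : y = q := by
    by_contra h
    exact (hdist y h).ne (hfyd.trans hyd.symm)
  rw [tendsto_iff_dist_tendsto_zero]
  rwa [← hyd, hyq, dist_self] at hd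

lemma ne_of_monotone_of_hasDerivAt_ne_zero {g : ℝ → ℝ} {g' x y : ℝ} (hg : Monotone g)
    (hx : HasDerivAt g g' x) (hg' : g' ≠ 0) (hxy : y ≠ x) : g y ≠ g x := by
  intro heq
  have hconst : ∀ z ∈ uIcc x y, g z = g x := fun z hz => by
    rcases le_total x y with h | h
    · rw [uIcc_of_le h] at hz
      exact le_antisymm ((hg hz.2).trans heq.le) (hg hz.1)
    · rw [uIcc_of_ge h] at hz
      exact le_antisymm (hg hz.2) (heq.ge.trans (hg hz.1))
  have hzero : HasDerivWithinAt g 0 (uIcc x y) x :=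
    (hasDerivWithinAt_const x _ (g x)).congr hconst rfl
  refine hg' (UniqueDiffWithinAt.eq_deriv _ ?_ hx.hasDerivWithinAt hzero)
  exact uniqueDiffOn_Icc (inf_lt_sup.2 hxy.symm) x left_mem_uIcc

lemma exists_eq_exp_of_hasDerivAt {z w : ℝ → ℂ} {a : ℝ} {c : ℂ} (hw : ContinuousOn w (Ici a))
    (hz : ∀ t ∈ Ici a, HasDerivAt z (z t * w t) t) (hc : z a = Complex.exp c) :
    ∃ l : ℝ → ℂ, l a = c ∧ (∀ t, HasDerivAt l (w (max t a)) t) ∧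
      ∀ t ∈ Ici a, z t = Complex.exp (l t) := by
  obtain ⟨l, hla, hl⟩ := exists_hasDerivAt_max hw c
  refine ⟨l, hla, hl, fun t ht => ?_⟩
  have hderiv : ∀ u ∈ Ici a, HasDerivAt (fun u => z u * Complex.exp (-l u)) 0 u := fun u hu => by
    have hlu := hl u
    rw [max_eq_left hu] at hlu
    exact ((hz u hu).fun_mul hlu.fun_neg.cexp).congr_deriv (by ring)
  have hconst : z t * Complex.exp (-l t) = z a * Complex.exp (-l a) :=
    constant_of_has_deriv_right_zero
      (fun u hu => (hderiv u hu.1).continuousAt.continuousWithinAt)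
      (fun u hu => (hderiv u hu.1).hasDerivWithinAt) t (right_mem_Icc.2 ht)
  rw [hc, hla, ← Complex.exp_add, add_neg_cancel, Complex.exp_zero, Complex.exp_neg] at hconst
  exact eq_of_mul_inv_eq_one hconst

lemma exists_orderIso_of_hasDerivAt_max {f g : ℝ → ℝ} {a : ℝ}
    (hf : ∀ t, HasDerivAt f (g (max t a)) t) (hg : ∀ t ∈ Ici a, 0 < g t)
    (htop : Tendsto f atTop atTop) : ∃ e : ℝ ≃o ℝ, ∀ t, e t = f t := by
  have hmono : StrictMono f :=
    strictMono_of_deriv_pos fun t => (hf t).deriv.symm ▸ hg _ (le_max_right t a)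
  have hcont : Continuous f := continuous_iff_continuousAt.2 fun t => (hf t).continuousAt
  have hline : ∀ t < a, f t ≤ f a + g a * (t - a) := fun t ht => by
    obtain ⟨c, hc, hslope⟩ := exists_hasDerivAt_eq_slope f _ ht hcont.continuousOn fun u _ => hf u
    rw [max_eq_right hc.2.le, eq_div_iff (sub_pos.2 ht).ne'] at hslope
    linarith
  have hbot : Tendsto f atBot atBot := by
    refine tendsto_atBot_mono' _ ((eventually_lt_atBot a).mono hline) ?_
    exact tendsto_atBot_add_const_left _ _
      ((tendsto_atBot_add_const_right _ (-a) tendsto_id).const_mul_atBot (hg a self_mem_Ici))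
  exact ⟨hmono.orderIsoOfSurjective f (hcont.surjective htop hbot), fun t => rfl⟩

lemma tendsto_atTop_of_frequently_sin {f : ℝ → ℝ} (hf : StrictMono f)
    (hnonpos : ∃ᶠ t in atTop, sin (f t) ≤ 0) (hnonneg : ∃ᶠ t in atTop, 0 ≤ sin (f t)) :
    Tendsto f atTop atTop := by
  refine (tendsto_atTop_of_monotone hf.monotone).resolve_right ?_
  rintro ⟨l, hl⟩
  set k : ℤ := ⌈l / π⌉ - 1 with hk
  have hceil : ((k : ℝ) + 1) = ⌈l / π⌉ := by simp [hk]
  have hk_lt : k * π < l := by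
    rw [← lt_div_iff₀ pi_pos]
    linarith [Int.ceil_lt_add_one (l / π)]
  have hl_le : l ≤ k * π + π := by
    rw [← add_one_mul, hceil, ← div_le_iff₀ pi_pos]
    exact Int.le_ceil _
  have hsin : ∀ᶠ t in atTop, 0 < (-1) ^ k * sin (f t) := by
    filter_upwards [hl.eventually_const_lt hk_lt] with t ht
    have hft : f t < l := (hf (lt_add_one t)).trans_le (hf.monotone.ge_of_tendsto hl (t + 1))
    rw [← sin_sub_int_mul_pi]
    exact sin_pos_of_pos_of_lt_pi (by linarith) (by linarith)
  rcases Int.even_or_odd k with hk | hk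
  · obtain ⟨t, hle, hlt⟩ := (hnonpos.and_eventually hsin).exists
    rw [hk.neg_one_zpow, one_mul] at hlt
    exact hlt.not_ge hle
  · obtain ⟨t, hge, hlt⟩ := (hnonneg.and_eventually hsin).exists
    rw [hk.neg_one_zpow] at hlt
    linarith

end RealAnalysis

section ODE

variable {E : Type*} [NormedAddCommGroup E] [NormedSpace ℝ E] {F : E → E}

lemma eqOn_of_hasDerivAt_of_contDiff (hF : ContDiff ℝ 1 F) {f g : ℝ → E} {I : Set ℝ}
    (hI : I.OrdConnected) (hf : ∀ t ∈ I, HasDerivAt f (F (f t)) t)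
    (hg : ∀ t ∈ I, HasDerivAt g (F (g t)) t) {t₀ : ℝ} (ht₀ : t₀ ∈ I) (h₀ : f t₀ = g t₀) :
    EqOn f g I := by
  intro t ht
  have hsub : uIcc t₀ t ⊆ I := hI.uIcc_subset ht₀ ht
  have hfcont : ContinuousOn f (uIcc t₀ t) := HasDerivAt.continuousOn fun u hu => hf u (hsub hu)
  have hgcont : ContinuousOn g (uIcc t₀ t) := HasDerivAt.continuousOn fun u hu => hg u (hsub hu)
  obtain ⟨K, hK⟩ := hF.locallyLipschitz.locallyLipschitzOn.exists_lipschitzOnWith_of_compact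
    ((isCompact_uIcc.image_of_continuousOn hfcont).union
      (isCompact_uIcc.image_of_continuousOn hgcont))
  have hfmem : ∀ u ∈ uIcc t₀ t, f u ∈ f '' uIcc t₀ t ∪ g '' uIcc t₀ t :=
    fun u hu => Or.inl (mem_image_of_mem f hu)
  have hgmem : ∀ u ∈ uIcc t₀ t, g u ∈ f '' uIcc t₀ t ∪ g '' uIcc t₀ t :=
    fun u hu => Or.inr (mem_image_of_mem g hu)
  rcases le_total t₀ t with h | h
  · rw [uIcc_of_le h] at *
    exact ODE_solution_unique_of_mem_Icc_right (v := fun _ => F) (fun _ _ => hK)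
      hfcont (fun u hu => (hf u (hsub (Ico_subset_Icc_self hu))).hasDerivWithinAt)
      (fun u hu => hfmem u (Ico_subset_Icc_self hu))
      hgcont (fun u hu => (hg u (hsub (Ico_subset_Icc_self hu))).hasDerivWithinAt)
      (fun u hu => hgmem u (Ico_subset_Icc_self hu)) h₀ (right_mem_Icc.2 h)
  · rw [uIcc_of_ge h] at *
    exact ODE_solution_unique_of_mem_Icc_left (v := fun _ => F) (fun _ _ => hK)
      hfcont (fun u hu => (hf u (hsub (Ioc_subset_Icc_self hu))).hasDerivWithinAt)
      (fun u hu => hfmem u (Ioc_subset_Icc_self hu))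
      hgcont (fun u hu => (hg u (hsub (Ioc_subset_Icc_self hu))).hasDerivWithinAt)
      (fun u hu => hgmem u (Ioc_subset_Icc_self hu)) h₀ (left_mem_Icc.2 h)

lemma range_subset_range_of_hasDerivAt (hF : ContDiff ℝ 1 F) {f g : ℝ → E}
    (hf : ∀ t, HasDerivAt f (F (f t)) t) (hg : ∀ t, HasDerivAt g (F (g t)) t) {a b : ℝ}
    (hab : f a = g b) : range f ⊆ range g := by
  have heq : EqOn f (fun t => g (t + (b - a))) univ :=
    eqOn_of_hasDerivAt_of_contDiff hF ordConnected_univ (fun t _ => hf t)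
      (fun t _ => (hg (t + (b - a))).comp_add_const t (b - a)) (mem_univ a) (by simpa using hab)
  rintro _ ⟨t, rfl⟩
  exact ⟨t + (b - a), (heq (mem_univ t)).symm⟩

open scoped Manifold in
lemma exists_forall_hasDerivAt_of_hasCompactSupport [CompleteSpace E] (hF : ContDiff ℝ 1 F)
    (hsupp : HasCompactSupport F) (x : E) :
    ∃ γ : ℝ → E, γ 0 = x ∧ ∀ t, HasDerivAt γ (F (γ t)) t := by
  obtain ⟨K, hK⟩ := hF.lipschitzWith_of_hasCompactSupport hsupp one_ne_zero
  obtain ⟨L, hL⟩ := hsupp.exists_bound_of_continuous hF.continuous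
  have hlocal : ∀ a : ℝ, ∃ γ : ℝ → E, γ 0 = x ∧
      IsMIntegralCurveOn (I := 𝓘(ℝ, E)) γ F (Ioo (-a) a) := by
    intro a
    have h0 : (0 : ℝ) ∈ Icc (-|a|) |a| := by simp
    have hpicard : IsPicardLindelof (fun _ => F) ⟨0, h0⟩ x
        (L.toNNReal * |a|.toNNReal) 0 L.toNNReal K :=
      .of_time_independent (fun y _ => (hL y).trans (le_coe_toNNReal L)) hK.lipschitzOnWith
        (by simp)
    obtain ⟨γ, hγ0, hγ⟩ := hpicard.exists_eq_forall_mem_Icc_hasDerivWithinAt₀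
    have hsub : Ioo (-a) a ⊆ Icc (-|a|) |a| := fun t ht =>
      abs_le.1 ((abs_lt.2 ht).le.trans (le_abs_self a))
    exact ⟨γ, hγ0, fun t ht => ((hγ t (hsub ht)).mono hsub).hasFDerivWithinAt.hasMFDerivWithinAt⟩
  obtain ⟨γ, hγ0, hγ⟩ := (exists_isMIntegralCurve_iff_exists_isMIntegralCurveOn_Ioo
    (contMDiff_vectorSpace_iff_contDiff.2 hF) x).2 hlocal
  exact ⟨γ, hγ0, fun t => hasDerivAt_iff_hasFDerivAt.2 (hasMFDerivAt_iff_hasFDerivAt.1 (hγ t))⟩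

lemma exists_periodic_of_add_eq {α : Type*} {γ : ℝ → α} {T : ℝ} (hT : 0 < T)
    (hγ : ∀ s ∈ Ici (0 : ℝ), γ (s + T) = γ s) :
    ∃ μ : ℝ → α, Function.Periodic μ T ∧
      ∀ (t : ℝ) (n : ℕ), 0 ≤ t + n * T → μ t = γ (t + n * T) := by
  have hsteps : ∀ (j : ℕ), ∀ s ∈ Ici (0 : ℝ), γ (s + j * T) = γ s := fun j s hs => by
    induction j with
    | zero => simp
    | succ j ih =>
      rw [← ih, ← hγ (s + j * T) (add_nonneg (mem_Ici.1 hs) (by positivity))]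
      push_cast
      ring_nf
  set N : ℝ → ℕ := fun t => ⌈|t| / T⌉₊
  have hN : ∀ t, 0 ≤ t + N t * T := fun t => by
    linarith [neg_abs_le t, (div_le_iff₀ hT).1 (Nat.le_ceil (|t| / T))]
  have hshift : ∀ (t : ℝ) (n : ℕ), 0 ≤ t + n * T → γ (t + N t * T) = γ (t + n * T) := by
    intro t n hn
    rcases le_total n (N t) with h | h
    · rw [← hsteps (N t - n) _ hn]
      push_cast [h]
      ring_nf
    · rw [← hsteps (n - N t) _ (hN t)]
      push_cast [h]
      ring_nf
  refine ⟨fun t => γ (t + N t * T), fun t => ?_, hshift⟩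
  obtain ⟨n, hn⟩ := exists_nat_gt (-t / T)
  have hn' : 0 < t + n * T := by linarith [(div_lt_iff₀ hT).1 hn]
  calc γ (t + T + N (t + T) * T) = γ (t + T + n * T) := hshift _ n (by linarith)
    _ = γ (t + n * T + T) := by ring_nf
    _ = γ (t + n * T) := hγ _ hn'.le
    _ = γ (t + N t * T) := (hshift t n hn'.le).symm

lemma exists_periodic_eqOn_of_hasDerivAt (hF : ContDiff ℝ 1 F) {γ : ℝ → E} {T : ℝ} (hT : 0 < T)
    (hγ : ∀ t ∈ Ici (0 : ℝ), HasDerivAt γ (F (γ t)) t) (hγT : γ T = γ 0) :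
    ∃ μ : ℝ → E, (∀ t, HasDerivAt μ (F (μ t)) t) ∧ Function.Periodic μ T ∧ EqOn μ γ (Ici 0) := by
  have hstep : EqOn (fun s => γ (s + T)) γ (Ici 0) :=
    eqOn_of_hasDerivAt_of_contDiff hF ordConnected_Ici
      (fun s hs => (hγ (s + T) (add_nonneg hs hT.le)).comp_add_const s T) hγ self_mem_Ici
      (by simpa using hγT)
  obtain ⟨μ, hper, hμ⟩ := exists_periodic_of_add_eq hT hstep
  refine ⟨μ, fun t => ?_, hper, fun t ht => by simpa using hμ t 0 (by simpa using ht)⟩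
  obtain ⟨n, hn⟩ := exists_nat_gt (-t / T)
  have hn' : 0 < t + n * T := by linarith [(div_lt_iff₀ hT).1 hn]
  have heq : μ =ᶠ[𝓝 t] fun u => γ (u + n * T) := by
    filter_upwards [(continuous_add_const (n * T)).continuousAt.eventually_const_lt hn'] with u hu
    exact hμ u n hu.le
  rw [heq.eq_of_nhds]
  exact ((hγ _ hn'.le).comp_add_const t _).congr_of_eventuallyEq heq

end ODE

section PlanarSystem

variable {φ : ℝ × ℝ → ℝ} {γ : ℝ → ℝ × ℝ} {M : ℝ}

/-- The derivative `x φ_x + y φ_y` of `φ` along the rays issuing from the origin; its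
nonnegativity is the star-shapedness condition. -/
def radialDeriv (φ : ℝ × ℝ → ℝ) (p : ℝ × ℝ) : ℝ :=
  p.1 * fderiv ℝ φ p (1, 0) + p.2 * fderiv ℝ φ p (0, 1)

/-- The squared Euclidean norm, as opposed to the sup norm carried by `ℝ × ℝ`. -/
def radiusSq (p : ℝ × ℝ) : ℝ := p.1 ^ 2 + p.2 ^ 2

/-- The moment `y ẋ - x ẏ` of the velocity of (S), i.e. the squared radius times the clockwise
angular speed. -/
def clockwiseMoment (φ : ℝ × ℝ → ℝ) (p : ℝ × ℝ) : ℝ := radiusSq p + p.1 * p.2 * φ p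

/-- The divergence of the vector field of (S). -/
def phiDiv (φ : ℝ × ℝ → ℝ) (p : ℝ × ℝ) : ℝ := -φ p - p.2 * fderiv ℝ φ p (0, 1)

lemma sq_norm_le_radiusSq (p : ℝ × ℝ) : ‖p‖ ^ 2 ≤ radiusSq p := by
  have h1 : ‖p.1‖ ^ 2 ≤ radiusSq p := by simp [radiusSq, sq_nonneg]
  have h2 : ‖p.2‖ ^ 2 ≤ radiusSq p := by simp [radiusSq, sq_nonneg]
  rcases max_choice ‖p.1‖ ‖p.2‖ with h | h <;> rwa [Prod.norm_def, h]

lemma radiusSq_le_two_mul_sq_norm (p : ℝ × ℝ) : radiusSq p ≤ 2 * ‖p‖ ^ 2 := by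
  have h1 : p.1 ^ 2 ≤ ‖p‖ ^ 2 := sq_le_sq.2 (by simpa using norm_fst_le p)
  have h2 : p.2 ^ 2 ≤ ‖p‖ ^ 2 := sq_le_sq.2 (by simpa using norm_snd_le p)
  unfold radiusSq
  linarith

lemma radiusSq_pos {p : ℝ × ℝ} (hp : p ≠ 0) : 0 < radiusSq p :=
  (pow_pos (norm_pos_iff.2 hp) 2).trans_le (sq_norm_le_radiusSq p)

lemma contDiff_phiVF (hφ : ContDiff ℝ 1 φ) : ContDiff ℝ 1 (phiVF φ) := by
  unfold phiVF
  fun_prop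

lemma continuous_radialDeriv (hφ : ContDiff ℝ 1 φ) : Continuous (radialDeriv φ) := by
  have := hφ.continuous_fderiv one_ne_zero
  unfold radialDeriv
  fun_prop

lemma continuous_phiDiv (hφ : ContDiff ℝ 1 φ) : Continuous (phiDiv φ) := by
  have := hφ.continuous
  have := hφ.continuous_fderiv one_ne_zero
  unfold phiDiv
  fun_prop

lemma continuous_clockwiseMoment (hφ : Continuous φ) : Continuous (clockwiseMoment φ) := by
  unfold clockwiseMoment radiusSq
  fun_prop

lemma hasDerivAt_fst_comp {v : ℝ × ℝ} {t : ℝ} (h : HasDerivAt γ v t) :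
    HasDerivAt (fun t => (γ t).1) v.1 t := h.fst

lemma hasDerivAt_snd_comp {v : ℝ × ℝ} {t : ℝ} (h : HasDerivAt γ v t) :
    HasDerivAt (fun t => (γ t).2) v.2 t := h.snd

lemma hasDerivAt_comp_of_contDiff (hφ : ContDiff ℝ 1 φ) {v : ℝ × ℝ} {t : ℝ}
    (h : HasDerivAt γ v t) :
    HasDerivAt (fun t => φ (γ t))
      (v.1 * fderiv ℝ φ (γ t) (1, 0) + v.2 * fderiv ℝ φ (γ t) (0, 1)) t := by
  have hv : fderiv ℝ φ (γ t) v =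
      v.1 * fderiv ℝ φ (γ t) (1, 0) + v.2 * fderiv ℝ φ (γ t) (0, 1) := by
    rw [← smul_eq_mul, ← smul_eq_mul, ← map_smul, ← map_smul, ← map_add]
    simp
  rw [← hv]
  exact (hφ.differentiable one_ne_zero _).hasFDerivAt.comp_hasDerivAt t h

lemma hasDerivAt_radiusSq_comp {c t : ℝ} (h : HasDerivAt γ (c • phiVF φ (γ t)) t) :
    HasDerivAt (fun t => radiusSq (γ t)) (-(2 * c * (γ t).2 ^ 2 * φ (γ t))) t := by
  refine ((hasDerivAt_fst_comp h).pow 2).add ((hasDerivAt_snd_comp h).pow 2) |>.congr_deriv ?_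
  simp only [phiVF, Prod.smul_mk, smul_eq_mul, Nat.cast_ofNat, Nat.add_one_sub_one, pow_one]
  ring

lemma hasDerivAt_clockwiseMoment_comp (hφ : ContDiff ℝ 1 φ) {t : ℝ}
    (h : HasDerivAt γ (phiVF φ (γ t)) t) :
    HasDerivAt (fun t => clockwiseMoment φ (γ t))
      (phiDiv φ (γ t) * clockwiseMoment φ (γ t) + (γ t).2 ^ 2 * radialDeriv φ (γ t)) t := by
  have hr := hasDerivAt_radiusSq_comp (c := 1) (h.congr_deriv (one_smul ℝ _).symm)
  have hxy := (hasDerivAt_fst_comp h).fun_mul (hasDerivAt_snd_comp h)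
  refine (hr.add (hxy.mul (hasDerivAt_comp_of_contDiff hφ h))).congr_deriv ?_
  simp only [phiVF, clockwiseMoment, radiusSq, phiDiv, radialDeriv]
  ring

lemma IsSolOn.continuousOn {F : ℝ × ℝ → ℝ × ℝ} {s : Set ℝ} (h : IsSolOn F γ s) :
    ContinuousOn γ s :=
  HasDerivAt.continuousOn h

lemma IsSolOn.comp_add_const {F : ℝ × ℝ → ℝ × ℝ} {c : ℝ} {s u : Set ℝ} (h : IsSolOn F γ s)
    (hu : MapsTo (· + c) u s) : IsSolOn F (fun t => γ (t + c)) u :=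
  fun t ht => (h (t + c) (hu ht)).comp_add_const t c

lemma IsSolOn.ne_zero_of_not_const (hφ : ContDiff ℝ 1 φ) {I : Set ℝ} (hI : I.OrdConnected)
    (hγ : IsSolOn (phiVF φ) γ I) (hne : ∃ t₁ ∈ I, ∃ t₂ ∈ I, γ t₁ ≠ γ t₂) :
    ∀ t ∈ I, γ t ≠ 0 := by
  intro t ht h0
  have hrest : IsSolOn (phiVF φ) (fun _ => 0) I := fun u _ =>
    (hasDerivAt_const u _).congr_deriv (by simp [phiVF, Prod.ext_iff])
  have heq := eqOn_of_hasDerivAt_of_contDiff (contDiff_phiVF hφ) hI hγ hrest ht h0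
  obtain ⟨t₁, ht₁, t₂, ht₂, hne⟩ := hne
  exact hne ((heq ht₁).trans (heq ht₂).symm)

lemma clockwiseMoment_pos (hφ : ContDiff ℝ 1 φ) (hstar : ∀ p, 0 ≤ radialDeriv φ p) {a : ℝ}
    (hγ : IsSolOn (phiVF φ) γ (Ici a)) (ha : 0 < clockwiseMoment φ (γ a)) :
    ∀ t ∈ Ici a, 0 < clockwiseMoment φ (γ t) :=
  pos_of_mul_le_deriv ((continuous_phiDiv hφ).comp_continuousOn hγ.continuousOn)
    (fun t ht => hasDerivAt_clockwiseMoment_comp hφ (hγ t ht))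
    (fun _ _ => le_add_of_nonneg_right (mul_nonneg (sq_nonneg _) (hstar _))) ha

lemma radiusSq_le_of_nonneg {K a : ℝ} {c : ℝ → ℝ} (hK : ∀ p, K < radiusSq p → 0 ≤ φ p)
    (hc : ∀ t, 0 ≤ c t) (hγ : ∀ t ∈ Ici a, HasDerivAt γ (c t • phiVF φ (γ t)) t)
    (ha : radiusSq (γ a) ≤ K) : ∀ t ∈ Ici a, radiusSq (γ t) ≤ K := by
  refine le_of_deriv_nonpos_of_lt (fun t ht => hasDerivAt_radiusSq_comp (hγ t ht))
    (fun t _ hlt => ?_) ha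
  have := hK _ hlt
  have := hc t
  rw [neg_nonpos]
  positivity

lemma le_radiusSq_of_nonpos {K a : ℝ} (hK : ∀ p, radiusSq p < K → φ p ≤ 0)
    (hγ : IsSolOn (phiVF φ) γ (Ici a)) (ha : K ≤ radiusSq (γ a)) :
    ∀ t ∈ Ici a, K ≤ radiusSq (γ t) := by
  have hderiv : ∀ t ∈ Ici a,
      HasDerivAt (fun t => -radiusSq (γ t)) (2 * 1 * (γ t).2 ^ 2 * φ (γ t)) t := fun t ht =>
    ((hasDerivAt_radiusSq_comp ((hγ t ht).congr_deriv (one_smul ℝ _).symm)).fun_neg).congr_deriv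
      (neg_neg _)
  have := le_of_deriv_nonpos_of_lt hderiv (K := -K)
    (fun t _ hlt => mul_nonpos_of_nonneg_of_nonpos (by positivity) (hK _ (neg_lt_neg_iff.1 hlt)))
    (neg_le_neg ha)
  exact fun t ht => neg_le_neg_iff.1 (this t ht)

lemma exists_isSolOn_Ici (hφ : ContDiff ℝ 1 φ) {K : ℝ} (hK : ∀ p, K < radiusSq p → 0 ≤ φ p)
    (p : ℝ × ℝ) : ∃ γ, γ 0 = p ∧ IsSolOn (phiVF φ) γ (Ici 0) := by
  set L := max K (radiusSq p)
  let χ : ContDiffBump (0 : ℝ × ℝ) := ⟨√L + 1, √L + 2, by positivity, by linarith⟩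
  obtain ⟨γ, hγ0, hγ⟩ := exists_forall_hasDerivAt_of_hasCompactSupport
    (χ.contDiff.smul (contDiff_phiVF hφ)) χ.hasCompactSupport.smul_right p
  refine ⟨γ, hγ0, fun t ht => ?_⟩
  have hle : radiusSq (γ t) ≤ L :=
    radiusSq_le_of_nonneg (fun q hq => hK q ((le_max_left _ _).trans_lt hq))
      (fun u => χ.nonneg (x := γ u)) (fun u _ => hγ u) (hγ0 ▸ le_max_right _ _) t ht
  have hχ : χ (γ t) = 1 := by
    refine χ.one_of_mem_closedBall (mem_closedBall_zero_iff.2 ?_)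
    have := Real.le_sqrt_of_sq_le ((sq_norm_le_radiusSq (γ t)).trans hle)
    exact this.trans (by simp [χ])
  simpa [hχ] using hγ t

lemma exists_forall_radiusSq_lt_neg (hφ : Continuous φ) (h0 : φ (0, 0) < 0) :
    ∃ δ > 0, ∀ p, radiusSq p < δ ^ 2 → φ p < 0 := by
  obtain ⟨δ, hδ, hball⟩ := Metric.eventually_nhds_iff.1 (hφ.continuousAt.eventually_lt_const h0)
  refine ⟨δ, hδ, fun p hp => hball ?_⟩
  rw [Prod.mk_zero_zero, dist_zero_right]
  exact lt_of_pow_lt_pow_left₀ 2 hδ.le ((sq_norm_le_radiusSq p).trans_lt hp)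

/-- The damping `φ` feeds energy near the origin and dissipates it outside the disk of radius `M`,
so that solutions of (S) are trapped in an annulus. -/
structure IsTrapping (φ : ℝ × ℝ → ℝ) (M : ℝ) : Prop where
  contDiff : ContDiff ℝ 1 φ
  neg_at_zero : φ (0, 0) < 0
  radius_pos : 0 < M
  nonneg_of_lt_radiusSq : ∀ p, M ^ 2 < radiusSq p → 0 ≤ φ p

lemma IsTrapping.exists_norm_bounds (hφ : IsTrapping φ M) (hγ : IsSolOn (phiVF φ) γ (Ici 0))
    (h0 : γ 0 ≠ 0) : ∃ δ > 0, ∃ R, ∀ t ∈ Ici (0 : ℝ), δ ≤ ‖γ t‖ ∧ ‖γ t‖ ≤ R := by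
  obtain ⟨ε, hε, hneg⟩ := exists_forall_radiusSq_lt_neg hφ.contDiff.continuous hφ.neg_at_zero
  have hlower := le_radiusSq_of_nonpos (K := min (ε ^ 2) (radiusSq (γ 0)))
    (fun p hp => (hneg p (hp.trans_le (min_le_left _ _))).le) hγ (min_le_right _ _)
  have hupper := radiusSq_le_of_nonneg (K := max (M ^ 2) (radiusSq (γ 0)))
    (fun p hp => hφ.nonneg_of_lt_radiusSq p ((le_max_left _ _).trans_lt hp))
    (fun _ => zero_le_one) (fun t ht => (hγ t ht).congr_deriv (one_smul ℝ _).symm)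
    (le_max_right _ _)
  have hKpos : 0 < min (ε ^ 2) (radiusSq (γ 0)) := lt_min (by positivity) (radiusSq_pos h0)
  refine ⟨√(min (ε ^ 2) (radiusSq (γ 0)) / 2), by positivity, √(max (M ^ 2) (radiusSq (γ 0))),
    fun t ht => ⟨?_, Real.le_sqrt_of_sq_le ((sq_norm_le_radiusSq _).trans (hupper t ht))⟩⟩
  refine Real.sqrt_le_iff.2 ⟨norm_nonneg _, ?_⟩
  linarith [hlower t ht, radiusSq_le_two_mul_sq_norm (γ t)]

lemma exists_neg_mul_fst_lt {a C R ε σ : ℝ} (hγ : IsSolOn (phiVF φ) γ (Ici a))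
    (hC : ∀ t ∈ Ici a, |φ (γ t)| ≤ C) (hR : ∀ t ∈ Ici a, ‖γ t‖ ≤ R)
    (hpos : ∀ t ∈ Ici a, 0 < (γ t).2) (hε : 0 < ε) (hσ : |σ| ≤ 1) :
    ∃ t ∈ Ici a, -(σ * (γ t).1) < ε := by
  by_contra! hge
  have hC0 : 0 ≤ C := (abs_nonneg _).trans (hC a self_mem_Ici)
  have hgrow : Tendsto (fun t => σ * (γ t).2 + C * (γ t).1) atTop atTop := by
    refine tendsto_atTop_of_le_deriv hε (fun t ht =>
      ((hasDerivAt_snd_comp (hγ t ht)).const_mul σ).add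
        ((hasDerivAt_fst_comp (hγ t ht)).const_mul C)) fun t ht => ?_
    have hσφ : σ * φ (γ t) ≤ C := by
      calc σ * φ (γ t) ≤ |σ| * |φ (γ t)| := by rw [← abs_mul]; exact le_abs_self _
        _ ≤ 1 * C := mul_le_mul hσ (hC t ht) (abs_nonneg _) zero_le_one
        _ = C := one_mul C
    have := mul_le_mul_of_nonneg_left hσφ (hpos t ht).le
    simp only [phiVF]
    linarith [hge t ht]
  obtain ⟨t, hlt, ht⟩ :=
    ((hgrow.eventually_gt_atTop (1 * R + C * R)).and (eventually_ge_atTop a)).exists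
  have hx : (γ t).1 ≤ R := (le_abs_self _).trans ((norm_fst_le _).trans (hR t ht))
  have hy : |(γ t).2| ≤ R := (norm_snd_le _).trans (hR t ht)
  have hσy : σ * (γ t).2 ≤ 1 * R :=
    (le_abs_self _).trans (abs_mul σ _ ▸ mul_le_mul hσ hy (abs_nonneg _) zero_le_one)
  linarith [mul_le_mul_of_nonneg_left hx hC0]

-- While `y > 0`, `x` increases; boundedness then forces `x ≤ 0` and `x → 0`, and being bounded away
-- from the origin keeps `ẋ = y` bounded away from `0`.
lemma not_forall_snd_pos (hφ : Continuous φ) {a δ R : ℝ} (hγ : IsSolOn (phiVF φ) γ (Ici a))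
    (hδ : 0 < δ) (hlower : ∀ t ∈ Ici a, δ ≤ ‖γ t‖) (hupper : ∀ t ∈ Ici a, ‖γ t‖ ≤ R) :
    ¬ ∀ t ∈ Ici a, 0 < (γ t).2 := by
  intro hpos
  obtain ⟨C, hC⟩ := (isCompact_closedBall (0 : ℝ × ℝ) R).exists_bound_of_continuousOn
    hφ.continuousOn
  have hφC : ∀ t ∈ Ici a, |φ (γ t)| ≤ C := fun t ht =>
    hC _ (mem_closedBall_zero_iff.2 (hupper t ht))
  have hmono : MonotoneOn (fun t => (γ t).1) (Ici a) :=
    monotoneOn_of_hasDerivWithinAt_nonneg (convex_Ici a) hγ.continuousOn.fst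
      (fun t ht => (hasDerivAt_fst_comp (hγ t (interior_subset ht))).hasDerivWithinAt)
      (fun t ht => (hpos t (interior_subset ht)).le)
  have hx_nonpos : ∀ t ∈ Ici a, (γ t).1 ≤ 0 := by
    intro t ht
    by_contra! hxt
    have hsub : Ici t ⊆ Ici a := Ici_subset_Ici.2 ht
    obtain ⟨u, hu, hlt⟩ := exists_neg_mul_fst_lt (σ := -1) (fun u hu => hγ u (hsub hu))
      (fun u hu => hφC u (hsub hu)) (fun u hu => hupper u (hsub hu))
      (fun u hu => hpos u (hsub hu)) hxt (by simp)
    exact (hmono ht (hsub hu) hu).not_gt (by simpa using hlt)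
  obtain ⟨b, hb, hxb⟩ := exists_neg_mul_fst_lt hγ hφC hupper hpos hδ abs_one.le
  have hy_ge : ∀ t ∈ Ici b, δ ≤ (γ t).2 := fun t ht => by
    have hta : t ∈ Ici a := Ici_subset_Ici.2 hb ht
    have hx : ‖(γ t).1‖ < δ := by
      rw [Real.norm_of_nonpos (hx_nonpos t hta)]
      linarith [hmono hb hta ht]
    have hnorm := (le_max_iff.1 (hlower t hta)).resolve_left hx.not_ge
    rwa [Real.norm_of_nonneg (hpos t hta).le] at hnorm
  obtain ⟨t, hlt, ht⟩ := ((tendsto_atTop_of_le_deriv hδ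
    (fun t ht => hasDerivAt_fst_comp (hγ t (Ici_subset_Ici.2 hb ht))) hy_ge).eventually_gt_atTop 0
      |>.and (eventually_ge_atTop a)).exists
  exact hlt.not_ge (hx_nonpos t ht)

lemma not_forall_snd_neg (hφ : Continuous φ) {a δ R : ℝ} (hγ : IsSolOn (phiVF φ) γ (Ici a))
    (hδ : 0 < δ) (hlower : ∀ t ∈ Ici a, δ ≤ ‖γ t‖) (hupper : ∀ t ∈ Ici a, ‖γ t‖ ≤ R) :
    ¬ ∀ t ∈ Ici a, (γ t).2 < 0 := by
  have hneg : IsSolOn (phiVF fun p => φ (-p)) (fun t => -γ t) (Ici a) := fun t ht =>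
    (hγ t ht).fun_neg.congr_deriv (by ext <;> simp [phiVF]; ring)
  simpa using not_forall_snd_pos (hφ.comp continuous_neg) hneg hδ
    (by simpa using hlower) (by simpa using hupper)

lemma IsTrapping.frequently_snd_nonpos_and_nonneg (hφ : IsTrapping φ M)
    (hγ : IsSolOn (phiVF φ) γ (Ici 0)) (h0 : γ 0 ≠ 0) :
    (∃ᶠ t in atTop, (γ t).2 ≤ 0) ∧ ∃ᶠ t in atTop, 0 ≤ (γ t).2 := by
  obtain ⟨δ, hδ, R, hbounds⟩ := hφ.exists_norm_bounds hγ h0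
  have hcont := hφ.contDiff.continuous
  simp only [frequently_atTop]
  constructor <;> intro b
  all_goals
    have hsub : Ici (max b 0) ⊆ Ici (0 : ℝ) := Ici_subset_Ici.2 (le_max_right _ _)
  · have := not_forall_snd_pos hcont (fun t ht => hγ t (hsub ht)) hδ
      (fun t ht => (hbounds t (hsub ht)).1) (fun t ht => (hbounds t (hsub ht)).2)
    push Not at this
    exact this.imp fun t ht => ⟨(le_max_left b 0).trans ht.1, ht.2⟩
  · have := not_forall_snd_neg hcont (fun t ht => hγ t (hsub ht)) hδ
      (fun t ht => (hbounds t (hsub ht)).1) (fun t ht => (hbounds t (hsub ht)).2)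
    push Not at this
    exact this.imp fun t ht => ⟨(le_max_left b 0).trans ht.1, ht.2⟩

lemma IsTrapping.exists_snd_eq_zero (hφ : IsTrapping φ M) (hγ : IsSolOn (phiVF φ) γ (Ici 0))
    (h0 : γ 0 ≠ 0) : ∃ t ∈ Ici (0 : ℝ), (γ t).2 = 0 := by
  have hfreq := hφ.frequently_snd_nonpos_and_nonneg hγ h0
  obtain ⟨a, ha, hya⟩ := frequently_atTop.1 hfreq.1 0
  obtain ⟨b, hb, hyb⟩ := frequently_atTop.1 hfreq.2 0
  exact isPreconnected_Ici.intermediate_value ha hb hγ.continuousOn.snd ⟨hya, hyb⟩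

end PlanarSystem

section Polar

variable {φ : ℝ × ℝ → ℝ} {γ : ℝ → ℝ × ℝ} {M : ℝ}

/-- The point with logarithmic radius `ρ` and clockwise angle `s`. -/
def polarPoint (ρ s : ℝ) : ℝ × ℝ := (exp ρ * cos s, -(exp ρ * sin s))

/-- The clockwise angular speed of (S) in logarithmic polar coordinates. -/
def angularSpeed (φ : ℝ × ℝ → ℝ) (ρ s : ℝ) : ℝ := 1 - sin s * cos s * φ (polarPoint ρ s)

/-- The slope `dρ/ds` of the orbits of (S) in logarithmic polar coordinates. -/
def polarSlope (φ : ℝ × ℝ → ℝ) (ρ s : ℝ) : ℝ :=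
  -(sin s ^ 2 * φ (polarPoint ρ s)) / angularSpeed φ ρ s

/-- `ρ` is, over the angles in `S`, the logarithmic radius of an orbit of (S) turning clockwise. -/
def IsPolarSolOn (φ : ℝ × ℝ → ℝ) (ρ : ℝ → ℝ) (S : Set ℝ) : Prop :=
  ∀ s ∈ S, 0 < angularSpeed φ (ρ s) s ∧ HasDerivAt ρ (polarSlope φ (ρ s) s) s

/-- Along the solution `γ` on `[0, ∞)` the clockwise angle at time `t` is `τ t`, and `ρ` is the
logarithmic radius as a function of the angle. The values of `τ` at negative times are immaterial;
they make it an order isomorphism of `ℝ`. -/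
structure IsPolarLift (φ : ℝ × ℝ → ℝ) (γ : ℝ → ℝ × ℝ) (ρ : ℝ → ℝ) (τ : ℝ ≃o ℝ) : Prop where
  isPolarSolOn : IsPolarSolOn φ ρ (Ici (τ 0))
  eq_polarPoint : ∀ t ∈ Ici (0 : ℝ), γ t = polarPoint (ρ (τ t)) (τ t)

lemma radiusSq_polarPoint (ρ s : ℝ) : radiusSq (polarPoint ρ s) = exp ρ ^ 2 := by
  simp only [radiusSq, polarPoint]
  linear_combination exp ρ ^ 2 * sin_sq_add_cos_sq s

lemma clockwiseMoment_polarPoint (ρ s : ℝ) :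
    clockwiseMoment φ (polarPoint ρ s) = exp ρ ^ 2 * angularSpeed φ ρ s := by
  rw [clockwiseMoment, radiusSq_polarPoint]
  simp only [angularSpeed, polarPoint]
  ring

lemma equivRealProdCLM_symm_polarPoint (ρ s : ℝ) :
    Complex.equivRealProdCLM.symm (polarPoint ρ s) = Complex.exp ⟨ρ, -s⟩ := by
  apply Complex.ext <;> simp [polarPoint, Complex.exp_re, Complex.exp_im]

/-- The logarithmic derivative of a solution of (S), seen as a curve in `ℂ`: its real part is the
growth rate of the logarithmic radius and its imaginary part minus the clockwise angular speed. -/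
def logVelocity (φ : ℝ × ℝ → ℝ) (p : ℝ × ℝ) : ℂ :=
  ⟨-(p.2 ^ 2 * φ p / radiusSq p), -(clockwiseMoment φ p / radiusSq p)⟩

lemma equivRealProdCLM_symm_mul_logVelocity {p : ℝ × ℝ} (hp : p ≠ 0) :
    Complex.equivRealProdCLM.symm p * logVelocity φ p =
      Complex.equivRealProdCLM.symm (phiVF φ p) := by
  have hr := (radiusSq_pos hp).ne'
  apply Complex.ext <;>
    simp only [logVelocity, clockwiseMoment, phiVF, Complex.mul_re, Complex.mul_im,
      Complex.equivRealProdCLM_symm_apply_re, Complex.equivRealProdCLM_symm_apply_im] <;>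
    field_simp <;> simp only [radiusSq] <;> ring

lemma logVelocity_polarPoint (ρ s : ℝ) :
    logVelocity φ (polarPoint ρ s) =
      ⟨-(sin s ^ 2 * φ (polarPoint ρ s)), -angularSpeed φ ρ s⟩ := by
  have hρ := (exp_pos ρ).ne'
  rw [logVelocity, clockwiseMoment_polarPoint, radiusSq_polarPoint,
    mul_div_cancel_left₀ _ (pow_ne_zero 2 hρ)]
  congr 2
  simp only [polarPoint]
  field_simp

lemma continuousOn_logVelocity (hφ : Continuous φ) : ContinuousOn (logVelocity φ) {0}ᶜ := by
  have hr : Continuous radiusSq := by unfold radiusSq; fun_prop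
  have hmoment := continuous_clockwiseMoment hφ
  have hne : ∀ p ∈ ({0}ᶜ : Set (ℝ × ℝ)), radiusSq p ≠ 0 := fun p hp => (radiusSq_pos hp).ne'
  have hpair : ContinuousOn (fun p : ℝ × ℝ =>
      (-(p.2 ^ 2 * φ p / radiusSq p), -(clockwiseMoment φ p / radiusSq p))) {0}ᶜ := by
    fun_prop (disch := assumption)
  exact Complex.equivRealProdCLM.symm.continuous.comp_continuousOn hpair

lemma exists_polar_coordinates (hφ : Continuous φ) (hγ : IsSolOn (phiVF φ) γ (Ici 0))
    (hne : ∀ t ∈ Ici (0 : ℝ), γ t ≠ 0) {r a : ℝ} (h0 : γ 0 = polarPoint r a) :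
    ∃ L τ : ℝ → ℝ, L 0 = r ∧ τ 0 = a ∧
      (∀ t ∈ Ici (0 : ℝ), γ t = polarPoint (L t) (τ t)) ∧
      (∀ t ∈ Ici (0 : ℝ), HasDerivAt L (-(sin (τ t) ^ 2 * φ (polarPoint (L t) (τ t)))) t) ∧
      ∀ t, HasDerivAt τ (angularSpeed φ (L (max t 0)) (τ (max t 0))) t := by
  obtain ⟨l, hl0, hl, hexp⟩ := exists_eq_exp_of_hasDerivAt
    (z := fun t => Complex.equivRealProdCLM.symm (γ t)) (w := fun t => logVelocity φ (γ t))
    ((continuousOn_logVelocity hφ).comp hγ.continuousOn hne)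
    (fun t ht => (Complex.equivRealProdCLM.symm.hasFDerivAt.comp_hasDerivAt t
      (hγ t ht)).congr_deriv (equivRealProdCLM_symm_mul_logVelocity (hne t ht)).symm)
    (h0 ▸ equivRealProdCLM_symm_polarPoint r a)
  have hpolar : ∀ t ∈ Ici (0 : ℝ), γ t = polarPoint (l t).re (-(l t).im) := fun t ht =>
    Complex.equivRealProdCLM.symm.injective <| by
      rw [hexp t ht, equivRealProdCLM_symm_polarPoint, neg_neg]
  have hderiv : ∀ t, HasDerivAt l (logVelocity φ
      (polarPoint (l (max t 0)).re (-(l (max t 0)).im))) t := fun t => by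
    rw [← hpolar _ (le_max_right t 0)]
    exact hl t
  simp only [logVelocity_polarPoint] at hderiv
  refine ⟨fun t => (l t).re, fun t => -(l t).im, by simp [hl0], by simp [hl0], hpolar,
    fun t ht => ?_, fun t => ?_⟩
  · have := Complex.reCLM.hasFDerivAt.comp_hasDerivAt t (hderiv t)
    rwa [max_eq_left ht] at this
  · exact (Complex.imCLM.hasFDerivAt.comp_hasDerivAt t (hderiv t)).fun_neg.congr_deriv (by simp)

lemma IsTrapping.tendsto_angle (hφ : IsTrapping φ M) (hγ : IsSolOn (phiVF φ) γ (Ici 0))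
    (h0 : γ 0 ≠ 0) {L τ : ℝ → ℝ} (hpolar : ∀ t ∈ Ici (0 : ℝ), γ t = polarPoint (L t) (τ t))
    (hτ : StrictMono τ) : Tendsto τ atTop atTop := by
  have hsnd : ∀ t ∈ Ici (0 : ℝ), (γ t).2 = -(exp (L t) * sin (τ t)) := fun t ht => by
    rw [hpolar t ht, polarPoint]
  obtain ⟨hfreq_nonpos, hfreq_nonneg⟩ := hφ.frequently_snd_nonpos_and_nonneg hγ h0
  refine tendsto_atTop_of_frequently_sin hτ ?_ ?_
  · refine (hfreq_nonneg.and_eventually (eventually_ge_atTop 0)).mono fun t ⟨hy, ht⟩ => ?_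
    rw [hsnd t ht, neg_nonneg] at hy
    exact nonpos_of_mul_nonpos_right hy (exp_pos _)
  · refine (hfreq_nonpos.and_eventually (eventually_ge_atTop 0)).mono fun t ⟨hy, ht⟩ => ?_
    rw [hsnd t ht, neg_nonpos] at hy
    exact nonneg_of_mul_nonneg_right hy (exp_pos _)

lemma isPolarSolOn_comp_symm {L : ℝ → ℝ} {τ : ℝ ≃o ℝ} {I : Set ℝ}
    (hspeed : ∀ t ∈ I, 0 < angularSpeed φ (L t) (τ t))
    (hL : ∀ t ∈ I, HasDerivAt L (-(sin (τ t) ^ 2 * φ (polarPoint (L t) (τ t)))) t)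
    (hτ : ∀ t ∈ I, HasDerivAt τ (angularSpeed φ (L t) (τ t)) t) :
    IsPolarSolOn φ (fun s => L (τ.symm s)) (τ.symm ⁻¹' I) := by
  intro s hs
  have hsymm := (hτ _ hs).of_local_left_inverse (g := τ.symm) τ.symm.continuous.continuousAt
    (hspeed _ hs).ne' (.of_forall τ.apply_symm_apply)
  have hpos := hspeed _ hs
  have hderiv := (hL _ hs).comp s hsymm
  rw [τ.apply_symm_apply] at hpos hderiv
  exact ⟨hpos, hderiv⟩

lemma IsTrapping.exists_isPolarLift (hφ : IsTrapping φ M) (hstar : ∀ p, 0 ≤ radialDeriv φ p)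
    (hγ : IsSolOn (phiVF φ) γ (Ici 0)) {r a : ℝ} (h0 : γ 0 = polarPoint r a)
    (hspeed : 0 < angularSpeed φ r a) :
    ∃ ρ τ, τ 0 = a ∧ ρ a = r ∧ IsPolarLift φ γ ρ τ := by
  have hmoment : ∀ t ∈ Ici (0 : ℝ), 0 < clockwiseMoment φ (γ t) := by
    refine clockwiseMoment_pos hφ.contDiff hstar hγ ?_
    rw [h0, clockwiseMoment_polarPoint]
    positivity
  have hne : ∀ t ∈ Ici (0 : ℝ), γ t ≠ 0 := fun t ht hzero => by
    simpa [hzero, clockwiseMoment, radiusSq] using hmoment t ht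
  obtain ⟨L, f, hL0, hf0, hpolar, hL, hf⟩ :=
    exists_polar_coordinates hφ.contDiff.continuous hγ hne h0
  have hspeed_pos : ∀ t ∈ Ici (0 : ℝ), 0 < angularSpeed φ (L t) (f t) := fun t ht => by
    have := hmoment t ht
    rw [hpolar t ht, clockwiseMoment_polarPoint] at this
    exact pos_of_mul_pos_right this (by positivity)
  have hmono : StrictMono f :=
    strictMono_of_deriv_pos fun t => (hf t).deriv.symm ▸ hspeed_pos _ (le_max_right t 0)
  obtain ⟨τ, hτ⟩ := exists_orderIso_of_hasDerivAt_max
    (g := fun t => angularSpeed φ (L t) (f t)) hf hspeed_pos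
    (hφ.tendsto_angle hγ (hne 0 self_mem_Ici) hpolar hmono)
  obtain rfl : f = τ := funext fun t => (hτ t).symm
  refine ⟨fun s => L (τ.symm s), τ, hf0, by simp [← hf0, hL0], fun s hs => ?_, fun t ht => ?_⟩
  · refine isPolarSolOn_comp_symm hspeed_pos hL (fun t ht => ?_) s (τ.le_symm_apply.2 hs)
    simpa only [max_eq_left (mem_Ici.1 ht)] using hf t
  · simpa using hpolar t ht

end Polar

section PoincareMap

variable {φ : ℝ × ℝ → ℝ} {γ : ℝ → ℝ × ℝ} {M : ℝ} {ρ ρ₁ ρ₂ : ℝ → ℝ} {P : ℝ → ℝ}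

lemma hasDerivAt_comp_polarPoint (hφ : ContDiff ℝ 1 φ) (r s : ℝ) :
    HasDerivAt (fun r => φ (polarPoint r s)) (radialDeriv φ (polarPoint r s)) r :=
  hasDerivAt_comp_of_contDiff hφ
    (((hasDerivAt_exp r).mul_const _).prodMk ((hasDerivAt_exp r).mul_const _).fun_neg)

lemma monotone_comp_polarPoint (hφ : ContDiff ℝ 1 φ) (hstar : ∀ p, 0 ≤ radialDeriv φ p) (s : ℝ) :
    Monotone fun r => φ (polarPoint r s) :=
  monotone_of_deriv_nonneg (fun r => (hasDerivAt_comp_polarPoint hφ r s).differentiableAt)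
    fun r => (hasDerivAt_comp_polarPoint hφ r s).deriv.symm ▸ hstar _

lemma IsPolarSolOn.hasDerivAt_sq_sub {S : Set ℝ} (h₁ : IsPolarSolOn φ ρ₁ S)
    (h₂ : IsPolarSolOn φ ρ₂ S) {s : ℝ} (hs : s ∈ S) :
    HasDerivAt (fun s => (ρ₁ s - ρ₂ s) ^ 2)
      (-(2 * sin s ^ 2 * ((φ (polarPoint (ρ₁ s) s) - φ (polarPoint (ρ₂ s) s)) * (ρ₁ s - ρ₂ s)) /
        (angularSpeed φ (ρ₁ s) s * angularSpeed φ (ρ₂ s) s))) s := by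
  have hne₁ := (h₁ s hs).1.ne'
  have hne₂ := (h₂ s hs).1.ne'
  refine (((h₁ s hs).2.fun_sub (h₂ s hs).2).fun_pow 2).congr_deriv ?_
  simp only [polarSlope]
  field_simp
  simp only [angularSpeed]
  ring

lemma IsPolarSolOn.abs_sub_le (hφ : ContDiff ℝ 1 φ) (hstar : ∀ p, 0 ≤ radialDeriv φ p) {a b : ℝ}
    (h₁ : IsPolarSolOn φ ρ₁ (Icc a b)) (h₂ : IsPolarSolOn φ ρ₂ (Icc a b)) (hab : a ≤ b) :
    |ρ₁ b - ρ₂ b| ≤ |ρ₁ a - ρ₂ a| := by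
  have hanti : AntitoneOn (fun s => (ρ₁ s - ρ₂ s) ^ 2) (Icc a b) := by
    refine antitoneOn_of_hasDerivWithinAt_nonpos (convex_Icc a b)
      (fun s hs => (h₁.hasDerivAt_sq_sub h₂ hs).continuousAt.continuousWithinAt)
      (fun s hs => (h₁.hasDerivAt_sq_sub h₂ (interior_subset hs)).hasDerivWithinAt)
      (fun s hs => neg_nonpos.2 ?_)
    have := (h₁ s (interior_subset hs)).1
    have := (h₂ s (interior_subset hs)).1
    have := monovary_id_iff.2 (monotone_comp_polarPoint hφ hstar s)
      |>.sub_mul_sub_nonneg (ρ₂ s) (ρ₁ s)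
    simp only [id] at this
    positivity
  exact sq_le_sq.1 (hanti (left_mem_Icc.2 hab) (right_mem_Icc.2 hab) hab)

lemma IsPolarSolOn.abs_sub_lt (hφ : ContDiff ℝ 1 φ) (hstar : ∀ p, 0 ≤ radialDeriv φ p) {a b c : ℝ}
    (h₁ : IsPolarSolOn φ ρ₁ (Icc a b)) (h₂ : IsPolarSolOn φ ρ₂ (Icc a b)) (hc : c ∈ Ioo a b)
    (hsin : sin c ≠ 0) (hradial : radialDeriv φ (polarPoint (ρ₂ c) c) ≠ 0) (hne : ρ₁ a ≠ ρ₂ a) :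
    |ρ₁ b - ρ₂ b| < |ρ₁ a - ρ₂ a| := by
  have hle : ∀ u ∈ Icc a b, ∀ v ∈ Icc u b, |ρ₁ v - ρ₂ v| ≤ |ρ₁ u - ρ₂ u| := fun u hu v hv =>
    have hsub : Icc u v ⊆ Icc a b := Icc_subset_Icc hu.1 hv.2
    IsPolarSolOn.abs_sub_le hφ hstar (fun s hs => h₁ s (hsub hs)) (fun s hs => h₂ s (hsub hs)) hv.1
  have hab : a ≤ b := (hc.1.trans hc.2).le
  refine (hle a (left_mem_Icc.2 hab) b (right_mem_Icc.2 hab)).lt_of_ne fun heq => ?_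
  have hconst : ∀ s ∈ Icc a b, (ρ₁ s - ρ₂ s) ^ 2 = (ρ₁ a - ρ₂ a) ^ 2 := fun s hs =>
    sq_eq_sq_iff_abs_eq_abs _ _ |>.2 <| le_antisymm (hle a (left_mem_Icc.2 hab) s hs)
      (heq.ge.trans (hle s hs b ⟨hs.2, le_rfl⟩))
  have hc' : c ∈ Icc a b := Ioo_subset_Icc_self hc
  have hderiv := (h₁.hasDerivAt_sq_sub h₂ hc').unique <|
    (hasDerivAt_const c ((ρ₁ a - ρ₂ a) ^ 2)).congr_of_eventuallyEq <|
      mem_of_superset (Icc_mem_nhds hc.1 hc.2) hconst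
  have hρ : ρ₁ c - ρ₂ c ≠ 0 := by
    rw [← sq_pos_iff, hconst c hc', sq_pos_iff]
    exact sub_ne_zero.2 hne
  have hφ_ne : φ (polarPoint (ρ₁ c) c) - φ (polarPoint (ρ₂ c) c) ≠ 0 :=
    sub_ne_zero.2 <| ne_of_monotone_of_hasDerivAt_ne_zero (monotone_comp_polarPoint hφ hstar c)
      (hasDerivAt_comp_polarPoint hφ _ c) hradial (sub_ne_zero.1 hρ)
  have := (h₁ c hc').1.ne'
  have := (h₂ c hc').1.ne'
  exact (show _ ≠ (0 : ℝ) by positivity) (neg_eq_zero.1 hderiv)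

lemma polarPoint_add_two_pi (r s : ℝ) : polarPoint r (s + 2 * π) = polarPoint r s := by
  simp [polarPoint]

lemma IsPolarSolOn.add_two_pi (h : IsPolarSolOn φ ρ (Ici 0)) :
    IsPolarSolOn φ (fun s => ρ (s + 2 * π)) (Ici 0) := by
  intro s hs
  have hs' : s + 2 * π ∈ Ici 0 := add_nonneg hs two_pi_pos.le
  obtain ⟨hspeed, hderiv⟩ := h _ hs'
  have hspeed_eq : ∀ r, angularSpeed φ r (s + 2 * π) = angularSpeed φ r s := fun r => by
    simp [angularSpeed, polarPoint_add_two_pi]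
  have hslope_eq : ∀ r, polarSlope φ r (s + 2 * π) = polarSlope φ r s := fun r => by
    simp [polarSlope, polarPoint_add_two_pi, hspeed_eq]
  rw [hspeed_eq] at hspeed
  rw [hslope_eq] at hderiv
  exact ⟨hspeed, hderiv.comp_add_const s (2 * π)⟩

/-- `P` is the Poincaré first return map of (S) to the positive `x`-axis, in logarithmic radius. -/
def IsPoincareMap (φ : ℝ × ℝ → ℝ) (P : ℝ → ℝ) : Prop :=
  ∀ ρ, IsPolarSolOn φ ρ (Ici 0) → ρ (2 * π) = P (ρ 0)

lemma IsPoincareMap.iterate (hP : IsPoincareMap φ P) (n : ℕ) :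
    ∀ ρ, IsPolarSolOn φ ρ (Ici 0) → ρ (n * (2 * π)) = P^[n] (ρ 0) := by
  induction n with
  | zero => simp
  | succ n ih =>
    intro ρ hρ
    rw [Function.iterate_succ_apply, ← hP ρ hρ]
    convert ih _ hρ.add_two_pi using 2
    · push_cast
      ring
    · simp

lemma IsTrapping.exists_isPolarLift_of_eq_polarPoint_zero (hφ : IsTrapping φ M)
    (hstar : ∀ p, 0 ≤ radialDeriv φ p) (hγ : IsSolOn (phiVF φ) γ (Ici 0)) {q : ℝ}
    (h0 : γ 0 = polarPoint q 0) : ∃ ρ τ, τ 0 = 0 ∧ ρ 0 = q ∧ IsPolarLift φ γ ρ τ :=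
  hφ.exists_isPolarLift hstar hγ h0 (by simp [angularSpeed])

lemma IsTrapping.exists_isSolOn_isPolarLift (hφ : IsTrapping φ M)
    (hstar : ∀ p, 0 ≤ radialDeriv φ p) (q : ℝ) :
    ∃ γ ρ τ, IsSolOn (phiVF φ) γ (Ici 0) ∧ γ 0 = polarPoint q 0 ∧ τ 0 = 0 ∧ ρ 0 = q ∧
      IsPolarLift φ γ ρ τ := by
  obtain ⟨γ, hγ0, hγ⟩ :=
    exists_isSolOn_Ici hφ.contDiff hφ.nonneg_of_lt_radiusSq (polarPoint q 0)
  obtain ⟨ρ, τ, hlift⟩ := hφ.exists_isPolarLift_of_eq_polarPoint_zero hstar hγ hγ0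
  exact ⟨γ, ρ, τ, hγ, hγ0, hlift⟩

lemma IsTrapping.exists_isPoincareMap (hφ : IsTrapping φ M) (hstar : ∀ p, 0 ≤ radialDeriv φ p) :
    ∃ P, Continuous P ∧ IsPoincareMap φ P := by
  have hexists : ∀ q, ∃ ρ : ℝ → ℝ, ρ 0 = q ∧ IsPolarSolOn φ ρ (Ici 0) := fun q => by
    obtain ⟨γ, ρ, τ, -, -, hτ0, hρ0, hlift⟩ := hφ.exists_isSolOn_isPolarLift hstar q
    exact ⟨ρ, hρ0, hτ0 ▸ hlift.isPolarSolOn⟩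
  choose ρ hρ0 hρ using hexists
  have hle : ∀ ρ₁ ρ₂, IsPolarSolOn φ ρ₁ (Ici 0) → IsPolarSolOn φ ρ₂ (Ici 0) →
      |ρ₁ (2 * π) - ρ₂ (2 * π)| ≤ |ρ₁ 0 - ρ₂ 0| := fun ρ₁ ρ₂ h₁ h₂ =>
    IsPolarSolOn.abs_sub_le hφ.contDiff hstar (fun s hs => h₁ s hs.1) (fun s hs => h₂ s hs.1)
      two_pi_pos.le
  refine ⟨fun q => ρ q (2 * π), ?_, fun ρ' hρ' => ?_⟩
  · refine (LipschitzWith.of_dist_le_mul (K := 1) fun a b => ?_).continuous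
    simpa [Real.dist_eq, hρ0] using hle _ _ (hρ a) (hρ b)
  · simpa [hρ0, sub_eq_zero] using hle _ _ hρ' (hρ (ρ' 0))

lemma IsPolarLift.apply_symm {τ : ℝ ≃o ℝ} (h : IsPolarLift φ γ ρ τ) {s : ℝ} (hs : τ 0 ≤ s) :
    γ (τ.symm s) = polarPoint (ρ s) s := by
  rw [h.eq_polarPoint _ (τ.le_symm_apply.2 hs), τ.apply_symm_apply]

lemma radiusSq_polarPoint_le_iff {r s β : ℝ} :
    radiusSq (polarPoint r s) ≤ exp β ^ 2 ↔ r ≤ β := by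
  rw [radiusSq_polarPoint, pow_le_pow_iff_left₀ (exp_pos _).le (exp_pos _).le two_ne_zero,
    exp_le_exp]

lemma le_radiusSq_polarPoint_iff {r s α : ℝ} :
    exp α ^ 2 ≤ radiusSq (polarPoint r s) ↔ α ≤ r := by
  rw [radiusSq_polarPoint, pow_le_pow_iff_left₀ (exp_pos _).le (exp_pos _).le two_ne_zero,
    exp_le_exp]

lemma IsTrapping.exists_isFixedPt (hφ : IsTrapping φ M) (hstar : ∀ p, 0 ≤ radialDeriv φ p)
    (hP : Continuous P) (hPoincare : IsPoincareMap φ P) : ∃ q, P q = q := by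
  obtain ⟨δ, hδ, hneg⟩ := exists_forall_radiusSq_lt_neg hφ.contDiff.continuous hφ.neg_at_zero
  set α := min (log δ) (log M)
  have hα : exp α ^ 2 ≤ δ ^ 2 :=
    pow_le_pow_left₀ (exp_pos _).le ((le_log_iff_exp_le hδ).1 (min_le_left _ _)) 2
  have hmaps : MapsTo P (Icc α (log M)) (Icc α (log M)) := by
    intro q hq
    obtain ⟨γ, ρ, τ, hγ, hγ0, hτ0, rfl, hlift⟩ := hφ.exists_isSolOn_isPolarLift hstar q
    have hreturn : γ (τ.symm (2 * π)) = polarPoint (ρ (2 * π)) (2 * π) :=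
      hlift.apply_symm (hτ0.trans_le two_pi_pos.le)
    have ht : τ.symm (2 * π) ∈ Ici 0 := τ.le_symm_apply.2 (hτ0.trans_le two_pi_pos.le)
    rw [← hPoincare ρ (hτ0 ▸ hlift.isPolarSolOn)]
    constructor
    · rw [← le_radiusSq_polarPoint_iff (s := 2 * π), ← hreturn]
      exact le_radiusSq_of_nonpos (fun p hp => (hneg p (hp.trans_le hα)).le) hγ
        (hγ0 ▸ le_radiusSq_polarPoint_iff.2 hq.1) _ ht
    · rw [← radiusSq_polarPoint_le_iff (s := 2 * π), ← hreturn]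
      exact radiusSq_le_of_nonneg
        (fun p hp => hφ.nonneg_of_lt_radiusSq p (exp_log hφ.radius_pos ▸ hp))
        (fun _ => zero_le_one) (fun t ht => (hγ t ht).congr_deriv (one_smul ℝ _).symm)
        (hγ0 ▸ radiusSq_polarPoint_le_iff.2 hq.2) _ ht
  obtain ⟨q, -, hq⟩ := exists_mem_Icc_isFixedPt_of_mapsTo hP.continuousOn (min_le_right _ _) hmaps
  exact ⟨q, hq⟩

lemma IsTrapping.tendsto_sub_of_apply_two_pi_eq (hφ : IsTrapping φ M)
    (hstar : ∀ p, 0 ≤ radialDeriv φ p) (h₁ : IsPolarSolOn φ ρ₁ (Ici 0))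
    (h : IsPolarSolOn φ ρ (Ici 0)) (hclosed : ρ (2 * π) = ρ 0) {c : ℝ}
    (hc : c ∈ Ioo 0 (2 * π)) (hsin : sin c ≠ 0)
    (hradial : radialDeriv φ (polarPoint (ρ c) c) ≠ 0) :
    Tendsto (fun s => ρ₁ s - ρ s) atTop (𝓝 0) := by
  obtain ⟨P, hPcont, hP⟩ := hφ.exists_isPoincareMap hstar
  have hfix : P (ρ 0) = ρ 0 := (hP ρ h).symm.trans hclosed
  have hcontract : ∀ x, x ≠ ρ 0 → dist (P x) (ρ 0) < dist x (ρ 0) := by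
    intro x hx
    obtain ⟨γ, ρ', τ, -, -, hτ0, rfl, hlift⟩ := hφ.exists_isSolOn_isPolarLift hstar x
    have h' : IsPolarSolOn φ ρ' (Ici 0) := hτ0 ▸ hlift.isPolarSolOn
    rw [← hP ρ' h', Real.dist_eq, Real.dist_eq]
    nth_rewrite 1 [← hclosed]
    exact IsPolarSolOn.abs_sub_lt hφ.contDiff hstar (fun s hs => h' s hs.1)
      (fun s hs => h s hs.1) hc hsin hradial hx
  have hiterate := tendsto_iterate_of_dist_lt hPcont hfix hcontract (ρ₁ 0)
  rw [Metric.tendsto_atTop] at hiterate ⊢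
  intro ε hε
  obtain ⟨n, hn⟩ := hiterate ε hε
  refine ⟨n * (2 * π), fun s hs => ?_⟩
  have hρn : ρ (n * (2 * π)) = ρ 0 := by
    rw [hP.iterate n ρ h, Function.iterate_fixed hfix]
  have hn0 : (0 : ℝ) ≤ n * (2 * π) := by positivity
  have hle := IsPolarSolOn.abs_sub_le hφ.contDiff hstar (fun s hs => h₁ s (hn0.trans hs.1))
    (fun s hs => h s (hn0.trans hs.1)) hs
  rw [dist_zero_right, norm_eq_abs]
  refine hle.trans_lt ?_
  rw [hρn, hP.iterate n ρ₁ h₁]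
  exact hn n le_rfl

end PoincareMap

section Cycle

variable {φ : ℝ × ℝ → ℝ} {F : ℝ × ℝ → ℝ × ℝ} {μ μ' : ℝ → ℝ × ℝ} {T T' : ℝ}

lemma IsCycle.periodic (h : IsCycle F μ T) : Function.Periodic μ T := h.2.2.1

lemma IsCycle.continuous (h : IsCycle F μ T) : Continuous μ :=
  continuous_iff_continuousAt.2 fun t => (h.1 t).continuousAt

lemma IsCycle.isCompact_range (h : IsCycle F μ T) : IsCompact (range μ) :=
  h.periodic.compact_of_continuous h.2.1.ne' h.continuous

lemma IsCycle.exists_ne_on_Ici (h : IsCycle F μ T) (a : ℝ) :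
    ∃ t₁ ∈ Ici a, ∃ t₂ ∈ Ici a, μ t₁ ≠ μ t₂ := by
  obtain ⟨t₁, t₂, hne⟩ := h.2.2.2
  obtain ⟨u₁, hu₁, h₁⟩ := h.periodic.exists_mem_Ico h.2.1 t₁ a
  obtain ⟨u₂, hu₂, h₂⟩ := h.periodic.exists_mem_Ico h.2.1 t₂ a
  exact ⟨u₁, hu₁.1, u₂, hu₂.1, h₁ ▸ h₂ ▸ hne⟩

lemma IsCycle.ne_zero (hφ : ContDiff ℝ 1 φ) (h : IsCycle (phiVF φ) μ T) (t : ℝ) : μ t ≠ 0 :=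
  IsSolOn.ne_zero_of_not_const hφ ordConnected_univ (fun t _ => h.1 t)
    (by simpa using h.2.2.2) t (mem_univ t)

lemma IsCycle.range_eq_of_tendsto_infDist (hF : ContDiff ℝ 1 F) (h : IsCycle F μ T)
    (h' : IsCycle F μ' T') (hlim : Tendsto (fun t => infDist (μ' t) (range μ)) atTop (𝓝 0)) :
    range μ' = range μ := by
  have hreturn : Tendsto (fun n : ℕ => (n : ℝ) * T') atTop atTop :=
    tendsto_natCast_atTop_atTop.atTop_mul_const h'.2.1
  have hconst : ∀ n : ℕ, infDist (μ' (n * T')) (range μ) = infDist (μ' 0) (range μ) := fun n => by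
    simpa using congrArg (infDist · (range μ)) (h'.periodic.nat_mul n 0)
  have hzero : infDist (μ' 0) (range μ) = 0 :=
    tendsto_nhds_unique (tendsto_const_nhds.congr fun n => (hconst n).symm) (hlim.comp hreturn)
  obtain ⟨t, ht⟩ := (h.isCompact_range.isClosed.mem_iff_infDist_zero (range_nonempty μ)).2 hzero
  exact (range_subset_range_of_hasDerivAt hF h'.1 h.1 ht.symm).antisymm
    (range_subset_range_of_hasDerivAt hF h.1 h'.1 ht)

lemma IsCycle.exists_radialDeriv_ne_zero (hφ : ContDiff ℝ 1 φ) (h : IsCycle (phiVF φ) μ T)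
    (hZ : ¬ HasOrbitIn (phiVF φ) {p | radialDeriv φ p = 0}) :
    ∃ t ∈ Ico 0 T, radialDeriv φ (μ t) ≠ 0 ∧ (μ t).2 ≠ 0 := by
  obtain ⟨a, ha⟩ : ∃ a, radialDeriv φ (μ a) ≠ 0 := by
    by_contra! hzero
    exact hZ ⟨μ, h.1, h.2.2.2, range_subset_iff.2 hzero⟩
  have hev : ∀ᶠ t in 𝓝 a, radialDeriv φ (μ t) ≠ 0 :=
    ((continuous_radialDeriv hφ).comp h.continuous).continuousAt.eventually_ne ha
  obtain ⟨b, hb⟩ : ∃ b, radialDeriv φ (μ b) ≠ 0 ∧ (μ b).2 ≠ 0 := by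
    by_contra! hzero
    have hy : (fun t => (μ t).2) =ᶠ[𝓝 a] fun _ => 0 := hev.mono hzero
    have hy' := (hasDerivAt_snd_comp (h.1 a)).unique <|
      (hasDerivAt_const a 0).congr_of_eventuallyEq hy
    have hya : (μ a).2 = 0 := hy.eq_of_nhds
    exact h.ne_zero hφ a (Prod.ext (by simpa [phiVF, hya] using hy') hya)
  obtain ⟨t, ht, hbt⟩ := h.periodic.exists_mem_Ico₀ h.2.1 b
  exact ⟨t, ht, hbt ▸ hb⟩

lemma IsCycle.integral_phiDiv_neg (hφ : ContDiff ℝ 1 φ) (hstar : ∀ p, 0 ≤ radialDeriv φ p)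
    (h : IsCycle (phiVF φ) μ T) (hmoment : ∀ t ∈ Icc 0 T, 0 < clockwiseMoment φ (μ t)) {a : ℝ}
    (ha : a ∈ Icc 0 T) (hradial : radialDeriv φ (μ a) ≠ 0) (hy : (μ a).2 ≠ 0) :
    ∫ t in (0 : ℝ)..T, phiDiv φ (μ t) < 0 := by
  set g : ℝ → ℝ := fun t => (μ t).2 ^ 2 * radialDeriv φ (μ t) / clockwiseMoment φ (μ t)
  have hlog : ∀ t ∈ uIcc 0 T, HasDerivAt (fun t => log (clockwiseMoment φ (μ t)))
      (phiDiv φ (μ t) + g t) t := fun t ht => by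
    have hne := (hmoment t (uIcc_of_le h.2.1.le ▸ ht)).ne'
    refine ((hasDerivAt_clockwiseMoment_comp hφ (h.1 t)).log hne).congr_deriv ?_
    rw [add_div, mul_div_cancel_right₀ _ hne]
  have hμ := h.continuous
  have hdiv_cont : Continuous fun t => phiDiv φ (μ t) := (continuous_phiDiv hφ).comp hμ
  have hg_cont : ContinuousOn g (Icc 0 T) := by
    have := (continuous_radialDeriv hφ).comp hμ
    exact ContinuousOn.div (by fun_prop)
      ((continuous_clockwiseMoment hφ.continuous).comp hμ).continuousOn
      fun t ht => (hmoment t ht).ne'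
  have hdiv_int := hdiv_cont.intervalIntegrable (μ := MeasureTheory.volume) 0 T
  have hg_int := hg_cont.intervalIntegrable_of_Icc (μ := MeasureTheory.volume) h.2.1.le
  have hsum : (∫ t in (0 : ℝ)..T, phiDiv φ (μ t)) + ∫ t in (0 : ℝ)..T, g t = 0 := by
    rw [← integral_add hdiv_int hg_int, integral_eq_sub_of_hasDerivAt hlog (hdiv_int.add hg_int),
      h.periodic.eq, sub_self]
  have hg_nonneg : ∀ t ∈ Icc 0 T, 0 ≤ g t := fun t ht =>
    div_nonneg (mul_nonneg (sq_nonneg _) (hstar _)) (hmoment t ht).le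
  have hg_pos : 0 < ∫ t in (0 : ℝ)..T, g t :=
    integral_pos h.2.1 hg_cont (fun t ht => hg_nonneg t (Ioc_subset_Icc_self ht))
      ⟨a, ha, (hg_nonneg a ha).lt_of_ne'
        (div_ne_zero (mul_ne_zero (pow_ne_zero 2 hy) hradial) (hmoment a ha).ne')⟩
  linarith

lemma HasOrbitIn.hasSemiOrbitIn {Z : Set (ℝ × ℝ)} (h : HasOrbitIn F Z) : HasSemiOrbitIn F Z := by
  obtain ⟨γ, hγ, ⟨t₁, t₂, hne⟩, hZ⟩ := h
  exact ⟨γ, min t₁ t₂, fun t _ => hγ t, ⟨t₁, mem_Ici.2 (min_le_left _ _), t₂,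
    mem_Ici.2 (min_le_right _ _), hne⟩, (image_subset_range _ _).trans hZ⟩

end Cycle

section Attraction

variable {φ : ℝ × ℝ → ℝ} {γ μ : ℝ → ℝ × ℝ} {M : ℝ}

lemma dist_polarPoint (r₁ r₂ s : ℝ) :
    dist (polarPoint r₁ s) (polarPoint r₂ s) = |exp (r₁ - r₂) - 1| * ‖polarPoint r₂ s‖ := by
  have hscale : polarPoint r₁ s = exp (r₁ - r₂) • polarPoint r₂ s := by
    simp [polarPoint, ← mul_assoc, ← exp_add]
  rw [hscale, dist_eq_norm, ← norm_eq_abs, ← norm_smul, sub_smul, one_smul]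

lemma polarPoint_zero_ne_polarPoint_pi (r₁ r₂ : ℝ) : polarPoint r₁ 0 ≠ polarPoint r₂ π := by
  intro h
  have := congrArg Prod.fst h
  simp only [polarPoint, cos_zero, cos_pi] at this
  linarith [exp_pos r₁, exp_pos r₂]

lemma IsTrapping.exists_eq_polarPoint_zero (hφ : IsTrapping φ M)
    (hstar : ∀ p, 0 ≤ radialDeriv φ p) (hγ : IsSolOn (phiVF φ) γ (Ici 0)) (h0 : γ 0 ≠ 0) :
    ∃ t ∈ Ici (0 : ℝ), ∃ q, γ t = polarPoint q 0 := by
  obtain ⟨t, ht, hy⟩ := hφ.exists_snd_eq_zero hγ h0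
  have hne : γ t ≠ 0 := by
    obtain ⟨δ, hδ, R, hbounds⟩ := hφ.exists_norm_bounds hγ h0
    exact norm_pos_iff.1 (hδ.trans_le (hbounds t ht).1)
  rcases lt_trichotomy (γ t).1 0 with hx | hx | hx
  · have hshift : IsSolOn (phiVF φ) (fun u => γ (u + t)) (Ici 0) :=
      hγ.comp_add_const fun u hu => mem_Ici.2 (add_nonneg (mem_Ici.1 hu) (mem_Ici.1 ht))
    have hstart : γ (0 + t) = polarPoint (log (-(γ t).1)) π := by
      rw [zero_add, polarPoint, exp_log (neg_pos.2 hx)]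
      simp [Prod.ext_iff, hy]
    obtain ⟨ρ, τ, hτ0, -, hlift⟩ :=
      hφ.exists_isPolarLift hstar hshift hstart (by simp [angularSpeed])
    have hτ : τ 0 ≤ 2 * π := by linarith [pi_pos]
    refine ⟨τ.symm (2 * π) + t, add_nonneg (τ.le_symm_apply.2 hτ) ht, ρ (2 * π), ?_⟩
    rw [hlift.apply_symm hτ, ← polarPoint_add_two_pi _ 0, zero_add]
  · exact absurd (Prod.ext hx hy) hne
  · exact ⟨t, ht, log (γ t).1, by simp [polarPoint, exp_log hx, Prod.ext_iff, hy]⟩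

lemma IsTrapping.exists_isCycle_isPolarLift (hφ : IsTrapping φ M)
    (hstar : ∀ p, 0 ≤ radialDeriv φ p) :
    ∃ μ T ρ τ, IsCycle (phiVF φ) μ T ∧ IsPolarLift φ μ ρ τ ∧ τ 0 = 0 ∧ τ T = 2 * π ∧
      ρ (2 * π) = ρ 0 := by
  obtain ⟨P, hPcont, hP⟩ := hφ.exists_isPoincareMap hstar
  obtain ⟨q, hq⟩ := hφ.exists_isFixedPt hstar hPcont hP
  obtain ⟨γ, ρ, τ, hγ, hγ0, hτ0, rfl, hlift⟩ := hφ.exists_isSolOn_isPolarLift hstar q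
  have hclosed : ρ (2 * π) = ρ 0 := (hP ρ (hτ0 ▸ hlift.isPolarSolOn)).trans hq
  have hT : 0 < τ.symm (2 * π) := τ.lt_symm_apply.2 (hτ0.trans_lt two_pi_pos)
  have hγT : γ (τ.symm (2 * π)) = γ 0 := by
    rw [hlift.apply_symm (hτ0.trans_le two_pi_pos.le), hclosed, hγ0, ← polarPoint_add_two_pi _ 0,
      zero_add]
  obtain ⟨μ, hμ, hper, hμγ⟩ :=
    exists_periodic_eqOn_of_hasDerivAt (contDiff_phiVF hφ.contDiff) hT hγ hγT
  have hliftμ : IsPolarLift φ μ ρ τ :=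
    ⟨hlift.isPolarSolOn, fun t ht => (hμγ ht).trans (hlift.eq_polarPoint t ht)⟩
  refine ⟨μ, _, ρ, τ, ⟨hμ, hT, hper, 0, τ.symm π, ?_⟩, hliftμ, hτ0, τ.apply_symm_apply _, hclosed⟩
  rw [hliftμ.apply_symm (hτ0.trans_le pi_pos.le), hliftμ.eq_polarPoint 0 self_mem_Ici, hτ0]
  exact polarPoint_zero_ne_polarPoint_pi _ _

lemma IsPolarLift.tendsto_infDist {ρ₁ ρ : ℝ → ℝ} {τ₁ τ : ℝ ≃o ℝ} (h₁ : IsPolarLift φ γ ρ₁ τ₁)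
    (h : IsPolarLift φ μ ρ τ) (hbdd : Bornology.IsBounded (range μ))
    (hlim : Tendsto (fun s => ρ₁ s - ρ s) atTop (𝓝 0)) :
    Tendsto (fun t => infDist (γ t) (range μ)) atTop (𝓝 0) := by
  obtain ⟨R, hR⟩ := hbdd.exists_norm_le
  have hbound : Tendsto (fun t => |exp (ρ₁ (τ₁ t) - ρ (τ₁ t)) - 1| * R) atTop (𝓝 0) := by
    simpa using (((hlim.comp τ₁.tendsto_atTop).rexp).sub_const 1).abs.mul_const R
  refine squeeze_zero' (.of_forall fun _ => infDist_nonneg) ?_ hbound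
  filter_upwards [eventually_ge_atTop 0, τ₁.tendsto_atTop.eventually_ge_atTop (τ 0)] with t ht hτ
  have hμ := h.apply_symm hτ
  calc infDist (γ t) (range μ) ≤ dist (γ t) (μ (τ.symm (τ₁ t))) :=
        infDist_le_dist_of_mem (mem_range_self _)
    _ = |exp (ρ₁ (τ₁ t) - ρ (τ₁ t)) - 1| * ‖μ (τ.symm (τ₁ t))‖ := by
        rw [h₁.eq_polarPoint t ht, hμ, dist_polarPoint]
    _ ≤ _ := by gcongr; exact hR _ (mem_range_self _)

end Attraction

section LimitCycle

variable {φ : ℝ × ℝ → ℝ} {γ μ : ℝ → ℝ × ℝ} {M T : ℝ} {ρ : ℝ → ℝ} {τ : ℝ ≃o ℝ}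

lemma IsCycle.exists_angle_radialDeriv_ne_zero (hφ : ContDiff ℝ 1 φ)
    (hZ : ¬ HasOrbitIn (phiVF φ) {p | radialDeriv φ p = 0}) (hμ : IsCycle (phiVF φ) μ T)
    (hlift : IsPolarLift φ μ ρ τ) (hτ0 : τ 0 = 0) (hτT : τ T = 2 * π) :
    ∃ c ∈ Ioo 0 (2 * π), sin c ≠ 0 ∧ radialDeriv φ (polarPoint (ρ c) c) ≠ 0 := by
  obtain ⟨t, ht, hradial, hy⟩ := hμ.exists_radialDeriv_ne_zero hφ hZ
  rw [hlift.eq_polarPoint t ht.1] at hradial hy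
  have hsin : sin (τ t) ≠ 0 := fun h => hy (by simp [polarPoint, h])
  have hpos : 0 ≤ τ t := hτ0 ▸ τ.monotone ht.1
  have hne : τ t ≠ 0 := fun h => hsin (by rw [h, sin_zero])
  exact ⟨τ t, ⟨hpos.lt_of_ne' hne, hτT ▸ τ.strictMono ht.2⟩, hsin, hradial⟩

lemma IsCycle.integral_phiDiv_neg_of_isPolarLift (hφ : ContDiff ℝ 1 φ)
    (hstar : ∀ p, 0 ≤ radialDeriv φ p) (hZ : ¬ HasOrbitIn (phiVF φ) {p | radialDeriv φ p = 0})
    (hμ : IsCycle (phiVF φ) μ T) (hlift : IsPolarLift φ μ ρ τ) :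
    ∫ t in (0 : ℝ)..T, phiDiv φ (μ t) < 0 := by
  have hmoment0 : 0 < clockwiseMoment φ (μ 0) := by
    have := (hlift.isPolarSolOn (τ 0) self_mem_Ici).1
    rw [hlift.eq_polarPoint 0 self_mem_Ici, clockwiseMoment_polarPoint]
    positivity
  have hmoment := clockwiseMoment_pos hφ hstar (fun t _ => hμ.1 t) hmoment0
  obtain ⟨t, ht, hradial, hy⟩ := hμ.exists_radialDeriv_ne_zero hφ hZ
  exact hμ.integral_phiDiv_neg hφ hstar (fun t ht => hmoment t ht.1) (Ico_subset_Icc_self ht)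
    hradial hy

lemma IsTrapping.tendsto_infDist_range (hφ : IsTrapping φ M)
    (hstar : ∀ p, 0 ≤ radialDeriv φ p) (hZ : ¬ HasOrbitIn (phiVF φ) {p | radialDeriv φ p = 0})
    (hμ : IsCycle (phiVF φ) μ T) (hlift : IsPolarLift φ μ ρ τ) (hτ0 : τ 0 = 0)
    (hτT : τ T = 2 * π) (hclosed : ρ (2 * π) = ρ 0) {t₀ : ℝ}
    (hγ : IsSolOn (phiVF φ) γ (Ici t₀)) (hne : ∃ t₁ ∈ Ici t₀, ∃ t₂ ∈ Ici t₀, γ t₁ ≠ γ t₂) :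
    Tendsto (fun t => infDist (γ t) (range μ)) atTop (𝓝 0) := by
  obtain ⟨c, hc, hsin, hradial⟩ :=
    hμ.exists_angle_radialDeriv_ne_zero hφ.contDiff hZ hlift hτ0 hτT
  have hγ0 : γ (0 + t₀) ≠ 0 := by
    simpa using hγ.ne_zero_of_not_const hφ.contDiff ordConnected_Ici hne t₀ self_mem_Ici
  obtain ⟨t, ht, q, hq⟩ := hφ.exists_eq_polarPoint_zero hstar
    (hγ.comp_add_const fun u hu => mem_Ici.2 (le_add_of_nonneg_left hu)) hγ0
  have hsol : IsSolOn (phiVF φ) (fun u => γ (u + (t + t₀))) (Ici 0) :=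
    hγ.comp_add_const fun u hu => by
      simp only [mem_Ici] at hu ht ⊢
      linarith
  obtain ⟨ρ₁, τ₁, hτ₁, -, hlift₁⟩ :=
    hφ.exists_isPolarLift_of_eq_polarPoint_zero hstar hsol (by simpa using hq)
  have hlim := hlift₁.tendsto_infDist hlift hμ.isCompact_range.isBounded <|
    hφ.tendsto_sub_of_apply_two_pi_eq hstar (hτ₁ ▸ hlift₁.isPolarSolOn)
      (hτ0 ▸ hlift.isPolarSolOn) hclosed hc hsin hradial
  refine (hlim.comp (tendsto_atTop_add_const_right atTop (-(t + t₀)) tendsto_id)).congr fun u => ?_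
  simp only [Function.comp_apply, id, neg_add_cancel_right]

end LimitCycle

theorem statement8_general (φ : ℝ × ℝ → ℝ) (hφ : ContDiff ℝ 1 φ)
    (h00 : φ (0, 0) < 0)
    (hstar : ∀ p : ℝ × ℝ,
      p.1 * fderiv ℝ φ p (1, 0) + p.2 * fderiv ℝ φ p (0, 1) ≥ 0)
    (hZstar : ¬ HasOrbitIn (phiVF φ)
      {p : ℝ × ℝ | p.1 * fderiv ℝ φ p (1, 0) + p.2 * fderiv ℝ φ p (0, 1) = 0})
    (M : ℝ) (hM : 0 < M)
    (hpos : ∀ p : ℝ × ℝ, M ^ 2 < p.1 ^ 2 + p.2 ^ 2 → φ p ≥ 0) :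
    ∃ (μ : ℝ → ℝ × ℝ) (T : ℝ), IsLimitCycle (phiVF φ) μ T ∧
      (∀ (μ' : ℝ → ℝ × ℝ) (T' : ℝ), IsLimitCycle (phiVF φ) μ' T' →
        range μ' = range μ) ∧
      (∫ t in (0:ℝ)..T,
        (-φ (μ t) - (μ t).2 * fderiv ℝ φ (μ t) (0, 1))) ≠ 0 ∧
      ∀ (γ : ℝ → ℝ × ℝ) (t₀ : ℝ), IsSolOn (phiVF φ) γ (Ici t₀) →
        (∃ t₁ ∈ Ici t₀, ∃ t₂ ∈ Ici t₀, γ t₁ ≠ γ t₂) →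
        Tendsto (fun t => Metric.infDist (γ t) (range μ)) atTop (𝓝 0) := by
  have htrap : IsTrapping φ M := ⟨hφ, h00, hM, hpos⟩
  obtain ⟨μ, T, ρ, τ, hμ, hlift, hτ0, hτT, hclosed⟩ := htrap.exists_isCycle_isPolarLift hstar
  have hattract : ∀ (γ : ℝ → ℝ × ℝ) (t₀ : ℝ), IsSolOn (phiVF φ) γ (Ici t₀) →
      (∃ t₁ ∈ Ici t₀, ∃ t₂ ∈ Ici t₀, γ t₁ ≠ γ t₂) →
      Tendsto (fun t => infDist (γ t) (range μ)) atTop (𝓝 0) := fun γ t₀ =>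
    htrap.tendsto_infDist_range hstar hZstar hμ hlift hτ0 hτT hclosed
  have hunique : ∀ μ' T', IsCycle (phiVF φ) μ' T' → range μ' = range μ := fun μ' T' hμ' =>
    hμ.range_eq_of_tendsto_infDist (contDiff_phiVF hφ) hμ'
      (hattract μ' 0 (fun t _ => hμ'.1 t) (hμ'.exists_ne_on_Ici 0))
  exact ⟨μ, T, ⟨hμ, univ, isOpen_univ, subset_univ _, fun μ' T' hμ' hne _ =>
    hne (hunique μ' T' hμ')⟩, fun μ' T' hμ' => hunique μ' T' hμ'.1,
    (hμ.integral_phiDiv_neg_of_isPolarLift hφ hstar hZstar hlift).ne, hattract⟩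

/-- under the star-shapedness condition with the non-invariance of
`{x φ_x + y φ_y = 0}`, the boundedness condition (`φ ≥ 0` outside `D_M`, with
`{φ = 0} \ D_M` containing no non-trivial positive semi-orbit), and
`φ(0,0) < 0`, the system (S) has exactly one limit cycle; it is hyperbolic and
attracts every non-constant solution. -/
theorem statement8 (φ : ℝ × ℝ → ℝ) (hφ : ContDiff ℝ 1 φ)
    (h00 : φ (0, 0) < 0)
    (hstar : ∀ p : ℝ × ℝ,
      p.1 * fderiv ℝ φ p (1, 0) + p.2 * fderiv ℝ φ p (0, 1) ≥ 0)
    (hZstar : ¬ HasSemiOrbitIn (phiVF φ)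
      {p : ℝ × ℝ | p.1 * fderiv ℝ φ p (1, 0) + p.2 * fderiv ℝ φ p (0, 1) = 0})
    (M : ℝ) (hM : 0 < M)
    (hpos : ∀ p : ℝ × ℝ, M ^ 2 < p.1 ^ 2 + p.2 ^ 2 → φ p ≥ 0)
    (hZφ : ¬ HasSemiOrbitIn (phiVF φ)
      ({p : ℝ × ℝ | φ p = 0} \ {p : ℝ × ℝ | p.1 ^ 2 + p.2 ^ 2 ≤ M ^ 2})) :
    ∃ (μ : ℝ → ℝ × ℝ) (T : ℝ), IsLimitCycle (phiVF φ) μ T ∧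
      (∀ (μ' : ℝ → ℝ × ℝ) (T' : ℝ), IsLimitCycle (phiVF φ) μ' T' →
        range μ' = range μ) ∧
      (∫ t in (0:ℝ)..T,
        (-φ (μ t) - (μ t).2 * fderiv ℝ φ (μ t) (0, 1))) ≠ 0 ∧
      ∀ (γ : ℝ → ℝ × ℝ) (t₀ : ℝ), IsSolOn (phiVF φ) γ (Ici t₀) →
        (∃ t₁ ∈ Ici t₀, ∃ t₂ ∈ Ici t₀, γ t₁ ≠ γ t₂) →
        Tendsto (fun t => Metric.infDist (γ t) (range μ)) atTop (𝓝 0) :=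
  statement8_general φ hφ h00 hstar (fun h => hZstar h.hasSemiOrbitIn) M hM hpos
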